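/- arXiv:1112.1934 — 3 statements merged into one kernel-verified Lean document; each statement's English description precedes it below -/
import Mathlib

section
/- Let T = {T1, T2; p1, p2} be a random map on [0,1] built from two LSV-type intermittent maps with exponents 0 < β < α < 1, satisfying Assumption (A). If f ∈ L¹(m) is nonnegative and decreasing, then the transfer operator image L_T f (the Radon–Nikodym derivative of E_T(f·m) with respect to m) is m-almost everywhere equal to a decreasing (antitone) function. -/
/-!
For one map `T` with weight `p`, the change of variables formula along the two injective branches
shows that the image of `p · f · m` under `T` has density
`a(x) f(v1 x) + 1_R(x) b(x) f(v2 x)`, with `a = (p / T') ∘ v1`, `b = (p / T') ∘ v2` and `R` the range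
of the second branch (`lintegral_branch`, `single_map`).

This density is decreasing. Let `x ≤ y < 1`. If `y ∈ R`, then `x ∈ R` because `R` is an initial
segment of `[0,1]`. As `v1`, `v2` are increasing and `f` is decreasing, the density at `x` is at least
`a(x) f(v1 y) + b(x) f(v2 y) = a(x) (f(v1 y) - f(v2 y)) + (a + b)(x) f(v2 y)`. Since
`v1 y < 1/2 ≤ v2 y`, both `f(v1 y) - f(v2 y)` and `f(v2 y)` are nonnegative, so the monotonicity of
`a` and of `a + b` bounds this below by the density at `y`. If `y ∉ R`, the second term vanishes
at `y` and is nonnegative at `x`, and the monotonicity of `a` suffices. Adding the densities of the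
two maps gives the Radon–Nikodym derivative of `E_T (f · m)`.
-/

open MeasureTheory Set

noncomputable section

/-- Lebesgue measure on the unit interval `[0,1]`. -/
def mI : Measure ℝ := volume.restrict (Icc 0 1)

/-- The data of the second (expanding) branch `g : [1/2,1] → [0,1]` of an LSV-type map,
together with its derivative `g'`:  `g(1/2) = 0`, `g` is `C¹`, increasing and `g' > 1`. -/
structure LSVBranch where
  g : ℝ → ℝ
  g' : ℝ → ℝ
  map_half : g (1 / 2) = 0
  mapsTo : MapsTo g (Icc (1 / 2 : ℝ) 1) (Icc (0 : ℝ) 1)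
  hasDeriv : ∀ x ∈ Icc (1 / 2 : ℝ) 1, HasDerivWithinAt g (g' x) (Icc (1 / 2 : ℝ) 1) x
  contDeriv : ContinuousOn g' (Icc (1 / 2 : ℝ) 1)
  deriv_gt_one : ∀ x ∈ Icc (1 / 2 : ℝ) 1, 1 < g' x
  strictMono : StrictMonoOn g (Icc (1 / 2 : ℝ) 1)

/-- The LSV-type intermittent map with exponent `γ` and second branch `G.g`:
`T x = x (1 + 2^γ x^γ)` on `[0,1/2)` and `T x = g x` on `[1/2,1]`. -/
def LSVmap (γ : ℝ) (G : LSVBranch) : ℝ → ℝ :=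
  fun x => if x < 1 / 2 then x * (1 + 2 ^ γ * x ^ γ) else G.g x

/-- The derivative of the LSV-type map with exponent `γ` and second branch `G`. -/
def LSVderiv (γ : ℝ) (G : LSVBranch) : ℝ → ℝ :=
  fun x => if x < 1 / 2 then 1 + (1 + γ) * 2 ^ γ * x ^ γ else G.g' x

/-- The action `E_T` of the random map `T = {T1, T2; p1, p2}` on measures:
`(E_T ν)(A) = ∫_{T1⁻¹ A} p1 dν + ∫_{T2⁻¹ A} p2 dν`. -/
def ET (T1 T2 p1 p2 : ℝ → ℝ) (ν : Measure ℝ) : Measure ℝ :=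
  (ν.withDensity fun x => ENNReal.ofReal (p1 x)).map T1
    + (ν.withDensity fun x => ENNReal.ofReal (p2 x)).map T2

/-- `p1, p2` are measurable position-dependent probabilities on `[0,1]`. -/
def ProbPair (p1 p2 : ℝ → ℝ) : Prop :=
  Measurable p1 ∧ Measurable p2 ∧
    (∀ x ∈ Icc (0 : ℝ) 1, p1 x ∈ Icc (0 : ℝ) 1 ∧ p2 x ∈ Icc (0 : ℝ) 1) ∧
    ∀ x ∈ Icc (0 : ℝ) 1, p1 x + p2 x = 1

/-- Assumption (A) for the LSV-type map with exponent `γ`, branch `G` and probability `p`: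
with `v1 x` the branch preimage of `x` in `[0,1/2)` and `v2 x` the branch preimage in
`[1/2,1]` (defined on the range of `g`), the weighted branch sums are decreasing. -/
def AssumptionA (γ : ℝ) (G : LSVBranch) (p : ℝ → ℝ) : Prop :=
  ∃ v1 v2 : ℝ → ℝ,
    (∀ x ∈ Ico (0 : ℝ) 1, v1 x ∈ Ico (0 : ℝ) (1 / 2) ∧ LSVmap γ G (v1 x) = x) ∧
    (∀ x ∈ G.g '' Icc (1 / 2 : ℝ) 1, v2 x ∈ Icc (1 / 2 : ℝ) 1 ∧ G.g (v2 x) = x) ∧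
    AntitoneOn (fun x => p (v1 x) / LSVderiv γ G (v1 x)) (Ico (0 : ℝ) 1) ∧
    AntitoneOn
      (fun x => p (v1 x) / LSVderiv γ G (v1 x) + p (v2 x) / LSVderiv γ G (v2 x))
      (G.g '' Icc (1 / 2 : ℝ) 1)

/-- Assumption (B): the probabilities are uniformly bounded below by some `δ > 0`. -/
def AssumptionB (p1 p2 : ℝ → ℝ) : Prop :=
  ∃ δ : ℝ, 0 < δ ∧ ∀ x ∈ Icc (0 : ℝ) 1, δ ≤ p1 x ∧ δ ≤ p2 x

/-- The cone `C_A`: nonnegative decreasing integrable functions with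
`∫_0^x f dm ≤ A x^(1-α) ∫_0^1 f dm`. -/
def InCone (α A : ℝ) (f : ℝ → ℝ) : Prop :=
  IntegrableOn f (Icc (0 : ℝ) 1) ∧ (∀ x ∈ Icc (0 : ℝ) 1, 0 ≤ f x) ∧
    AntitoneOn f (Icc (0 : ℝ) 1) ∧
    ∀ x ∈ Icc (0 : ℝ) 1, ∫ t in (0 : ℝ)..x, f t ≤ A * x ^ (1 - α) * ∫ t in (0 : ℝ)..1, f t

end

noncomputable section

/-! ### The branches of an LSV-type map -/

/-- The weight `1/T'` makes sense on `[0,1]`: the derivative of an LSV-type map is positive there. -/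
lemma LSVderiv_pos {γ : ℝ} (hγ : 0 < γ) (G : LSVBranch) {x : ℝ} (hx : x ∈ Icc (0 : ℝ) 1) :
    0 < LSVderiv γ G x := by
  unfold LSVderiv
  split_ifs with h
  · have := Real.rpow_nonneg hx.1 γ
    positivity
  · exact zero_lt_one.trans (G.deriv_gt_one x ⟨not_lt.mp h, hx.2⟩)

lemma LSVmap_strictMonoOn_left {γ : ℝ} (hγ : 0 < γ) (G : LSVBranch) :
    StrictMonoOn (LSVmap γ G) (Ico (0 : ℝ) (1 / 2)) := by
  intro x hx y hy hxy
  simp only [LSVmap, if_pos hx.2, if_pos hy.2]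
  have h1 : x ^ γ ≤ y ^ γ := Real.rpow_le_rpow hx.1 hxy.le hγ.le
  have h2 : (0 : ℝ) < 2 ^ γ := by positivity
  have h3 : 0 ≤ x ^ γ := Real.rpow_nonneg hx.1 γ
  have h4 : (2 : ℝ) ^ γ * x ^ γ ≤ 2 ^ γ * y ^ γ := by gcongr
  have h5 : 0 ≤ (2 : ℝ) ^ γ * x ^ γ := by positivity
  have h6 := hx.1
  nlinarith

lemma LSVmap_mem_left {γ : ℝ} (hγ : 0 < γ) (G : LSVBranch) {x : ℝ}
    (hx : x ∈ Ico (0 : ℝ) (1 / 2)) : LSVmap γ G x ∈ Ico (0 : ℝ) 1 := by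
  simp only [LSVmap, if_pos hx.2]
  have h3 : 0 ≤ x ^ γ := Real.rpow_nonneg hx.1 γ
  have h2 : (0 : ℝ) < 2 ^ γ := by positivity
  have h6 := hx.1
  have h7 := hx.2
  have h4 : (2 : ℝ) ^ γ * x ^ γ ≤ 1 := by
    rw [← Real.mul_rpow (by norm_num) hx.1]
    exact Real.rpow_le_one (by linarith) (by linarith) hγ.le
  refine ⟨by positivity, ?_⟩
  nlinarith

lemma LSVmap_hasDeriv_left {γ : ℝ} (hγ : 0 < γ) (G : LSVBranch) {x : ℝ}
    (hx : x ∈ Ico (0 : ℝ) (1 / 2)) :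
    HasDerivWithinAt (LSVmap γ G) (LSVderiv γ G x) (Ico (0 : ℝ) (1 / 2)) x := by
  -- `t ^ γ` is not differentiable at `0`, so the branch is rewritten as `t + 2 ^ γ * t ^ (1 + γ)`.
  have h1 : HasDerivAt (fun t : ℝ => t + 2 ^ γ * t ^ (1 + γ))
      (1 + 2 ^ γ * ((1 + γ) * x ^ (1 + γ - 1))) x :=
    (hasDerivAt_id x).add
      ((Real.hasDerivAt_rpow_const (Or.inr (by linarith))).const_mul _)
  have key : ∀ t ∈ Ico (0 : ℝ) (1 / 2), LSVmap γ G t = t + 2 ^ γ * t ^ (1 + γ) := by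
    intro t ht
    simp only [LSVmap, if_pos ht.2]
    rw [Real.rpow_add_of_nonneg ht.1 zero_le_one hγ.le, Real.rpow_one]
    ring
  have h2 := h1.hasDerivWithinAt.congr (s := Ico (0 : ℝ) (1 / 2)) key (key x hx)
  have h3 : LSVderiv γ G x = 1 + 2 ^ γ * ((1 + γ) * x ^ (1 + γ - 1)) := by
    simp only [LSVderiv, if_pos hx.2, add_sub_cancel_left]
    ring
  rw [h3]
  exact h2

/-- The range of the second branch is an initial segment of `[0,1]`. -/
lemma LSVBranch.mem_range_of_le (G : LSVBranch) {x y : ℝ} (hx : 0 ≤ x) (hxy : x ≤ y)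
    (hy : y ∈ G.g '' Icc (1 / 2 : ℝ) 1) : x ∈ G.g '' Icc (1 / 2 : ℝ) 1 := by
  have hc : ContinuousOn G.g (Icc (1 / 2 : ℝ) 1) := fun t ht => (G.hasDeriv t ht).continuousWithinAt
  have h0 : (0 : ℝ) ∈ G.g '' Icc (1 / 2 : ℝ) 1 := ⟨1 / 2, by norm_num, G.map_half⟩
  exact (isPreconnected_Icc.image _ hc).ordConnected.out h0 hy ⟨hx, hxy⟩

lemma LSVmap_aemeasurable {γ : ℝ} (G : LSVBranch) : AEMeasurable (LSVmap γ G) mI := by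
  have hc : ContinuousOn G.g (Icc (1 / 2 : ℝ) 1) := fun t ht => (G.hasDeriv t ht).continuousWithinAt
  have hu : Icc (0 : ℝ) 1 = Ico 0 (1 / 2) ∪ Icc (1 / 2) 1 :=
    (Ico_union_Icc_eq_Icc (by norm_num) (by norm_num)).symm
  unfold mI
  rw [hu, aemeasurable_union_iff]
  constructor
  · refine AEMeasurable.congr (f := fun x : ℝ => x * (1 + 2 ^ γ * x ^ γ)) (by fun_prop) ?_
    filter_upwards [ae_restrict_mem measurableSet_Ico] with x hx
    simp only [LSVmap, if_pos hx.2]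
  · refine (hc.aemeasurable measurableSet_Icc).congr ?_
    filter_upwards [ae_restrict_mem measurableSet_Icc] with x hx
    simp only [LSVmap, if_neg (not_lt.mpr hx.1)]

/-! ### Change of variables along a branch -/

/-- Change of variables along one branch: on the image of `s`, the pushforward of the density `q`
has density `q ∘ v / T'`, where `v` inverts the branch. No measurability of `q` or `v` is needed. -/
lemma lintegral_branch {T D v q : ℝ → ℝ} {s A : Set ℝ} (hs : MeasurableSet s)
    (hT : ∀ x ∈ s, HasDerivWithinAt T (D x) s x) (hinj : InjOn T s) (hD : ∀ x ∈ s, 0 < D x)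
    (hv : ∀ x ∈ s, v (T x) = x) :
    ∫⁻ x in s, (T ⁻¹' A).indicator (fun x => ENNReal.ofReal (q x)) x
      = ∫⁻ y in T '' s, A.indicator (fun y => ENNReal.ofReal (q (v y) / D (v y))) y := by
  rw [lintegral_image_eq_lintegral_abs_deriv_mul hs hT hinj]
  refine setLIntegral_congr_fun hs fun x hx => ?_
  by_cases hA : T x ∈ A
  · simp only [indicator_of_mem (show x ∈ T ⁻¹' A from hA), indicator_of_mem hA, hv x hx]
    rw [abs_of_pos (hD x hx), ← ENNReal.ofReal_mul (hD x hx).le, mul_div_cancel₀ _ (hD x hx).ne']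
  · simp [hA]

/-! ### The decreasing density of a single map -/

/-- One map of the pair: the pushforward of `p · f · m` has a nonnegative decreasing density. -/
lemma single_map {γ : ℝ} (hγ : 0 < γ) (G : LSVBranch) {p f : ℝ → ℝ} (hpm : Measurable p)
    (hp0 : ∀ x ∈ Icc (0 : ℝ) 1, 0 ≤ p x) (hA : AssumptionA γ G p)
    (hfm : Measurable f) (hf0 : ∀ x ∈ Icc (0 : ℝ) 1, 0 ≤ f x)
    (hfmono : AntitoneOn f (Icc (0 : ℝ) 1)) :
    ∃ h : ℝ → ℝ, AntitoneOn h (Icc (0 : ℝ) 1) ∧ (∀ x ∈ Icc (0 : ℝ) 1, 0 ≤ h x) ∧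
      ((mI.withDensity fun x => ENNReal.ofReal (f x)).withDensity
        fun x => ENNReal.ofReal (p x)).map (LSVmap γ G)
        = mI.withDensity fun x => ENNReal.ofReal (h x) := by
  classical
  obtain ⟨v1, v2, hv1, hv2, hanti1, hanti2⟩ := hA
  set R := G.g '' Icc (1 / 2 : ℝ) 1 with hR
  set D := LSVderiv γ G with hDdef
  set T := LSVmap γ G with hTdef
  have hc : ContinuousOn G.g (Icc (1 / 2 : ℝ) 1) := fun t ht => (G.hasDeriv t ht).continuousWithinAt
  have hRm : MeasurableSet R := (isCompact_Icc.image_of_continuousOn hc).measurableSet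
  have hRI : R ⊆ Icc 0 1 := G.mapsTo.image_subset
  have hv1I : ∀ x ∈ Ico (0 : ℝ) 1, v1 x ∈ Icc (0 : ℝ) 1 := fun x hx =>
    ⟨(hv1 x hx).1.1, by linarith [(hv1 x hx).1.2]⟩
  have hv2I : ∀ x ∈ R, v2 x ∈ Icc (0 : ℝ) 1 := fun x hx =>
    ⟨by linarith [(hv2 x hx).1.1], (hv2 x hx).1.2⟩
  have hv1mono : ∀ x ∈ Ico (0 : ℝ) 1, ∀ y ∈ Ico (0 : ℝ) 1, x ≤ y → v1 x ≤ v1 y := by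
    intro x hx y hy hxy
    by_contra! hlt
    have : T (v1 y) < T (v1 x) :=
      LSVmap_strictMonoOn_left hγ G (hv1 y hy).1 (hv1 x hx).1 hlt
    rw [(hv1 x hx).2, (hv1 y hy).2] at this
    linarith
  have hv2mono : ∀ x ∈ R, ∀ y ∈ R, x ≤ y → v2 x ≤ v2 y := by
    intro x hx y hy hxy
    by_contra! hlt
    have := G.strictMono (hv2 y hy).1 (hv2 x hx).1 hlt
    rw [(hv2 x hx).2, (hv2 y hy).2] at this
    linarith
  have ha0 : ∀ x ∈ Ico (0 : ℝ) 1, 0 ≤ p (v1 x) / D (v1 x) := fun x hx =>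
    div_nonneg (hp0 _ (hv1I x hx)) (LSVderiv_pos hγ G (hv1I x hx)).le
  have hb0 : ∀ x ∈ R, 0 ≤ p (v2 x) / D (v2 x) := fun x hx =>
    div_nonneg (hp0 _ (hv2I x hx)) (LSVderiv_pos hγ G (hv2I x hx)).le
  let h1 : ℝ → ℝ := fun x => p (v1 x) * f (v1 x) / D (v1 x)
  let h2 : ℝ → ℝ := fun x => p (v2 x) * f (v2 x) / D (v2 x)
  have h1eq : ∀ x, h1 x = p (v1 x) / D (v1 x) * f (v1 x) := fun x => by simp only [h1]; ring
  have h2eq : ∀ x, h2 x = p (v2 x) / D (v2 x) * f (v2 x) := fun x => by simp only [h2]; ring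
  have h1nn : ∀ x ∈ Ico (0 : ℝ) 1, 0 ≤ h1 x := fun x hx => by
    rw [h1eq]; exact mul_nonneg (ha0 x hx) (hf0 _ (hv1I x hx))
  have h2nn : ∀ x ∈ R, 0 ≤ h2 x := fun x hx => by
    rw [h2eq]; exact mul_nonneg (hb0 x hx) (hf0 _ (hv2I x hx))
  -- The value at `1`, where `v1` is undefined, is set to the smallest admissible one.
  let h : ℝ → ℝ := fun x => if x < 1 then h1 x + R.indicator h2 x else 0
  have hnn : ∀ x ∈ Icc (0 : ℝ) 1, 0 ≤ h x := by
    intro x hx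
    simp only [h]
    split_ifs with hx1
    · exact add_nonneg (h1nn x ⟨hx.1, hx1⟩) (indicator_nonneg h2nn x)
    · exact le_rfl
  have hanti : AntitoneOn h (Icc 0 1) := by
    intro x hx y hy hxy
    by_cases hy1 : y < 1
    · have hx1 : x < 1 := hxy.trans_lt hy1
      have hx' : x ∈ Ico (0 : ℝ) 1 := ⟨hx.1, hx1⟩
      have hy' : y ∈ Ico (0 : ℝ) 1 := ⟨hy.1, hy1⟩
      have ha := hanti1 hx' hy' hxy
      have hf1 : f (v1 y) ≤ f (v1 x) :=
        hfmono (hv1I x hx') (hv1I y hy') (hv1mono x hx' y hy' hxy)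
      simp only [h, if_pos hx1, if_pos hy1]
      by_cases hyR : y ∈ R
      · have hxR : x ∈ R := G.mem_range_of_le hx.1 hxy hyR
        have hab := hanti2 hxR hyR hxy
        have hf2 : f (v2 y) ≤ f (v2 x) :=
          hfmono (hv2I x hxR) (hv2I y hyR) (hv2mono x hxR y hyR hxy)
        have hf12 : f (v2 y) ≤ f (v1 y) :=
          hfmono (hv1I y hy') (hv2I y hyR) ((hv1 y hy').1.2.le.trans (hv2 y hyR).1.1)
        have hf2n := hf0 _ (hv2I y hyR)
        have hax := ha0 x hx'
        have hbx := hb0 x hxR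
        simp only [indicator_of_mem hyR, indicator_of_mem hxR, h1eq, h2eq]
        simp only at ha hab
        -- Abel summation: `a f(v1) + b f(v2) = a (f(v1) - f(v2)) + (a + b) f(v2)` at `v1 y`, `v2 y`.
        nlinarith [mul_le_mul_of_nonneg_left hf1 hax, mul_le_mul_of_nonneg_left hf2 hbx,
          mul_le_mul_of_nonneg_right ha (sub_nonneg.mpr hf12),
          mul_le_mul_of_nonneg_right hab hf2n]
      · rw [indicator_of_notMem hyR, add_zero]
        refine le_add_of_le_of_nonneg ?_ (indicator_nonneg h2nn x)
        rw [h1eq, h1eq]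
        exact mul_le_mul ha hf1 (hf0 _ (hv1I y hy')) (ha0 x hx')
    · have : h y = 0 := by simp only [h, if_neg hy1]
      rw [this]
      exact hnn x hx
  refine ⟨h, hanti, hnn, ?_⟩
  have hTae : AEMeasurable T mI := LSVmap_aemeasurable G
  have hac : (mI.withDensity fun x => ENNReal.ofReal (f x)).withDensity
      (fun x => ENNReal.ofReal (p x)) ≪ mI :=
    (withDensity_absolutelyContinuous _ _).trans (withDensity_absolutelyContinuous _ _)
  have himg1 : T '' Ico (0 : ℝ) (1 / 2) = Ico 0 1 := by
    ext y
    constructor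
    · rintro ⟨x, hx, rfl⟩
      exact LSVmap_mem_left hγ G hx
    · intro hy
      exact ⟨v1 y, (hv1 y hy).1, (hv1 y hy).2⟩
  have hTg : EqOn T G.g (Icc (1 / 2 : ℝ) 1) := fun x hx => by
    simp only [hTdef, LSVmap, if_neg (not_lt.mpr hx.1)]
  have himg2 : T '' Icc (1 / 2 : ℝ) 1 = R := hTg.image_eq
  ext A hAm
  rw [Measure.map_apply_of_aemeasurable (hTae.mono_ac hac) hAm]
  rw [← withDensity_mul _ (by fun_prop) (by fun_prop)]
  have hTA : NullMeasurableSet (T ⁻¹' A) mI := hTae.nullMeasurable hAm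
  rw [withDensity_apply₀ _ hTA, withDensity_apply _ hAm, ← lintegral_indicator₀ hTA,
    ← lintegral_indicator hAm]
  have hL : ∫⁻ x, (T ⁻¹' A).indicator ((fun x => ENNReal.ofReal (f x)) *
        fun x => ENNReal.ofReal (p x)) x ∂mI
      = ∫⁻ x in Icc (0 : ℝ) 1, (T ⁻¹' A).indicator (fun x => ENNReal.ofReal (p x * f x)) x := by
    unfold mI
    refine setLIntegral_congr_fun measurableSet_Icc fun x hx => ?_
    by_cases hxA : x ∈ T ⁻¹' A
    · simp only [indicator_of_mem hxA, Pi.mul_apply]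
      rw [mul_comm, ENNReal.ofReal_mul (hp0 x hx)]
    · simp only [indicator_of_notMem hxA]
  have hd : Disjoint (Ico (0 : ℝ) (1 / 2)) (Icc (1 / 2) 1) :=
    disjoint_left.mpr fun x hx hx' => absurd hx.2 (not_lt.mpr hx'.1)
  have hu : Icc (0 : ℝ) 1 = Ico 0 (1 / 2) ∪ Icc (1 / 2) 1 :=
    (Ico_union_Icc_eq_Icc (by norm_num) (by norm_num)).symm
  have hB1 := lintegral_branch (T := T) (D := D) (v := v1) (q := fun x => p x * f x) (A := A)
    (measurableSet_Ico (a := (0 : ℝ)) (b := 1 / 2)) (fun x hx => LSVmap_hasDeriv_left hγ G hx)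
    (LSVmap_strictMonoOn_left hγ G).injOn
    (fun x hx => LSVderiv_pos hγ G ⟨hx.1, by linarith [hx.2]⟩)
    (fun x hx => by
      have hm := LSVmap_mem_left hγ G hx
      exact (LSVmap_strictMonoOn_left hγ G).injOn (hv1 _ hm).1 hx (hv1 _ hm).2)
  have hB2 := lintegral_branch (T := T) (D := D) (v := v2) (q := fun x => p x * f x) (A := A)
    (measurableSet_Icc (a := (1 / 2 : ℝ)) (b := 1))
    (fun x hx => by
      have := (G.hasDeriv x hx).congr hTg (hTg hx)
      simpa only [hDdef, LSVderiv, if_neg (not_lt.mpr hx.1)] using this)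
    (hTg.injOn_iff.mpr G.strictMono.injOn)
    (fun x hx => LSVderiv_pos hγ G ⟨by linarith [hx.1], hx.2⟩)
    (fun x hx => by
      have hm : T x ∈ R := himg2 ▸ mem_image_of_mem T hx
      exact G.strictMono.injOn (hv2 _ hm).1 hx ((hv2 _ hm).2.trans (hTg hx)))
  rw [hL, hu, lintegral_union measurableSet_Icc hd, hB1, hB2, himg1, himg2]
  -- Both image integrals become integrals over `[0,1]`; the point `1` is negligible.
  have hcut : ∫⁻ y in R, A.indicator (fun y => ENNReal.ofReal (h2 y)) y
      = ∫⁻ y in Ico (0 : ℝ) 1,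
        R.indicator (A.indicator (fun y => ENNReal.ofReal (h2 y))) y := by
    rw [setLIntegral_congr (Ico_ae_eq_Icc (α := ℝ) (μ := volume)), lintegral_indicator hRm,
      Measure.restrict_restrict hRm, inter_eq_left.mpr hRI]
  have h1meas : AEMeasurable (fun y => A.indicator (fun y => ENNReal.ofReal (h1 y)) y)
      (volume.restrict (Ico (0 : ℝ) 1)) := by
    have : AntitoneOn h1 (Ico 0 1) := by
      intro x hx y hy hxy
      rw [h1eq, h1eq]
      exact mul_le_mul (hanti1 hx hy hxy)
        (hfmono (hv1I x hx) (hv1I y hy) (hv1mono x hx y hy hxy))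
        (hf0 _ (hv1I y hy)) (ha0 x hx)
    exact ((aemeasurable_restrict_of_antitoneOn measurableSet_Ico this).ennreal_ofReal).indicator
      hAm
  have hR2 : ∫⁻ x, A.indicator (fun x => ENNReal.ofReal (h x)) x ∂mI
      = ∫⁻ x in Ico (0 : ℝ) 1, A.indicator (fun x => ENNReal.ofReal (h x)) x := by
    unfold mI
    rw [setLIntegral_congr (Ico_ae_eq_Icc (α := ℝ) (μ := volume))]
  rw [hR2]
  change (∫⁻ y in Ico (0 : ℝ) 1, A.indicator (fun y => ENNReal.ofReal (h1 y)) y)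
    + ∫⁻ y in R, A.indicator (fun y => ENNReal.ofReal (h2 y)) y = _
  rw [hcut, ← lintegral_add_left' h1meas]
  refine setLIntegral_congr_fun measurableSet_Ico fun x hx => ?_
  by_cases hxA : x ∈ A
  · by_cases hxR : x ∈ R
    · simp only [indicator_of_mem hxA, indicator_of_mem hxR, h, if_pos hx.2]
      rw [ENNReal.ofReal_add (h1nn x hx) (h2nn x hxR)]
    · simp only [indicator_of_mem hxA, indicator_of_notMem hxR, h, if_pos hx.2, add_zero]
  · by_cases hxR : x ∈ R <;> simp [hxA, hxR]

/-! ### The random map -/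

/-- **Lemma 3.3.** Under Assumption (A), if `f ∈ L¹(m)` is nonnegative and decreasing,
then the transfer operator image `L_T f` (the Radon–Nikodym derivative of `E_T(f·m)`
with respect to `m`) agrees `m`-a.e. with a decreasing function. -/
theorem transfer_operator_preserves_antitone
    (α β : ℝ) (hβ : 0 < β) (hβα : β < α) (hα : α < 1)
    (G1 G2 : LSVBranch) (p1 p2 : ℝ → ℝ) (hp : ProbPair p1 p2)
    (hA1 : AssumptionA α G1 p1) (hA2 : AssumptionA β G2 p2)
    (f : ℝ → ℝ) (hfmeas : Measurable f) (hf0 : ∀ x ∈ Icc (0 : ℝ) 1, 0 ≤ f x)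
    (hfint : Integrable f mI) (hfmono : AntitoneOn f (Icc (0 : ℝ) 1)) :
    ∃ h : ℝ → ℝ, AntitoneOn h (Icc (0 : ℝ) 1) ∧
      (fun x => ((ET (LSVmap α G1) (LSVmap β G2) p1 p2
        (mI.withDensity fun x => ENNReal.ofReal (f x))).rnDeriv mI x).toReal)
        =ᵐ[mI] h := by
  obtain ⟨hp1, hp2, hp01, -⟩ := hp
  obtain ⟨h1, ha1, hn1, he1⟩ := single_map (hβ.trans hβα) G1 hp1
    (fun x hx => (hp01 x hx).1.1) hA1 hfmeas hf0 hfmono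
  obtain ⟨h2, ha2, hn2, he2⟩ := single_map hβ G2 hp2
    (fun x hx => (hp01 x hx).2.1) hA2 hfmeas hf0 hfmono
  refine ⟨fun x => h1 x + h2 x, fun x hx y hy hxy => add_le_add (ha1 hx hy hxy) (ha2 hx hy hxy), ?_⟩
  have hm1 : AEMeasurable (fun x => ENNReal.ofReal (h1 x)) mI :=
    (aemeasurable_restrict_of_antitoneOn measurableSet_Icc ha1).ennreal_ofReal
  have hm2 : AEMeasurable (fun x => ENNReal.ofReal (h2 x)) mI :=
    (aemeasurable_restrict_of_antitoneOn measurableSet_Icc ha2).ennreal_ofReal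
  have hsum : ET (LSVmap α G1) (LSVmap β G2) p1 p2
      (mI.withDensity fun x => ENNReal.ofReal (f x))
      = mI.withDensity fun x => ENNReal.ofReal (h1 x) + ENNReal.ofReal (h2 x) := by
    unfold ET
    rw [he1, he2]
    ext A hA
    rw [Measure.add_apply, withDensity_apply _ hA, withDensity_apply _ hA, withDensity_apply _ hA,
      lintegral_add_left' hm1.restrict]
  have : SigmaFinite mI := by unfold mI; infer_instance
  have hI : ∀ᵐ x ∂mI, x ∈ Icc (0 : ℝ) 1 := ae_restrict_mem measurableSet_Icc
  rw [hsum]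
  filter_upwards [Measure.rnDeriv_withDensity₀ mI (hm1.add hm2), hI] with x hx hxI
  have hx' : (mI.withDensity fun x => ENNReal.ofReal (h1 x) + ENNReal.ofReal (h2 x)).rnDeriv mI x
    = ENNReal.ofReal (h1 x) + ENNReal.ofReal (h2 x) := hx
  rw [hx', ← ENNReal.ofReal_add (hn1 x hxI) (hn2 x hxI),
    ENNReal.toReal_ofReal (add_nonneg (hn1 x hxI) (hn2 x hxI))]

end
end

section
/- Stochastic stability in the strong sense: for each ε > 0 with 0 < α - ε < 1, let T_ε = {T1, T_{1,ε}; p_{1,ε}, p_{2,ε}} be the random map consisting of the LSV-type map T1 with exponent α and the LSV-type map T_{1,ε} with exponent α - ε, with measurable position-dependent probabilities p_{1,ε} + p_{2,ε} = 1 satisfying Assumptions (A) and (B), and let f_ε be the density of the unique absolutely continuous invariant probability measure of T_ε. Let f* be the density of the unique absolutely continuous invariant probability measure of the deterministic map T1. If lim_{ε→0} sup_{x∈[0,1]} p_{2,ε}(x) = 0, then lim_{ε→0} ‖f_ε − f*‖_{L¹(m)} = 0. -/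
/-!
The proof works with decreasing probability densities on `(0,1)` whose mass on `(0,x)` is at most
`C x ^ (1 - α)`, where `C = 8 / (1 - α)` does not depend on `ε` (`DensCone`).  Assumption (A) makes
the weighted transfer operator of each map preserve decreasing densities (`transfer_one`), and since
`α - ε ≤ α` the transfer operator of the random map preserves the mass bound with the same constant
(`cone_step`, `cone_arith`).  A density in the cone is bounded by `C x ^ (-α)`, so Helly selection and
dominated convergence make the cone sequentially compact in `L¹` (`cone_compact`).  Averaging the
iterates of the constant density therefore yields an invariant density `H_ε` of `T_ε` in the cone
(`exists_inv`).

Because `sup p_{2,ε} → 0`, every `L¹` limit of the `H_ε` is invariant under `T1` alone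
(`limit_inv`), hence equal to `f*` by uniqueness of the ACIM of `T1` (`ae_eq_star`).  In particular
`f*` has a decreasing version, which has to be positive on all of `(0,1)` (`invariant_pos`).

It remains to identify `f_ε` with `H_ε`.  If `f` and `h` are invariant densities of `T_ε`, then
`p_{1,ε} > 0` forces the set `{f > h}` to be forward invariant under `T1` modulo null sets.  The ACIM
of `T1` is unique, hence gives this set measure `0` or `1`, and it is equivalent to Lebesgue measure;
as `f` and `h` have the same integral, they agree almost everywhere (`winv_unique`).  The convergence
`f_ε → f*` then follows by passing to subsequences.
-/

open MeasureTheory Set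

noncomputable section

/-! ### The maps and their branches -/

theorem mI_eq : mI = volume.restrict (Ioo (0 : ℝ) 1) :=
  Measure.restrict_congr_set Ioo_ae_eq_Icc.symm

instance : IsFiniteMeasure mI := by
  rw [mI_eq]; infer_instance

theorem ae_mem_Ioo : ∀ᵐ x ∂mI, x ∈ Ioo (0 : ℝ) 1 := by
  rw [mI_eq]; exact ae_restrict_mem measurableSet_Ioo

/-- A globally measurable modification of `LSVmap`, obtained by clamping the argument of the second
branch to `[1/2,1]`; outside that interval `G.g` is an arbitrary function. -/
def Tm (γ : ℝ) (G : LSVBranch) (x : ℝ) : ℝ :=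
  if x < 1 / 2 then x * (1 + 2 ^ γ * x ^ γ) else G.g (max (1 / 2) (min x 1))

theorem LSVBranch.continuousOn (G : LSVBranch) : ContinuousOn G.g (Icc (1 / 2 : ℝ) 1) :=
  fun x hx => (G.hasDeriv x hx).continuousWithinAt

theorem Tm_measurable (γ : ℝ) (G : LSVBranch) : Measurable (Tm γ G) := by
  refine Measurable.ite measurableSet_Iio (by fun_prop) (Continuous.measurable ?_)
  refine G.continuousOn.comp_continuous (by fun_prop) fun x => ⟨le_max_left _ _, ?_⟩
  exact max_le (by norm_num) (min_le_right _ _)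

theorem Tm_of_lt {γ : ℝ} {G : LSVBranch} {x : ℝ} (h : x < 1 / 2) :
    Tm γ G x = x * (1 + 2 ^ γ * x ^ γ) := if_pos h

theorem Tm_of_ge {γ : ℝ} {G : LSVBranch} {x : ℝ} (h : 1 / 2 ≤ x) (h1 : x ≤ 1) :
    Tm γ G x = G.g x := by
  rw [Tm, if_neg (not_lt.2 h), min_eq_left h1, max_eq_right h]

theorem Tm_eq {γ : ℝ} {G : LSVBranch} {x : ℝ} (h1 : x ≤ 1) :
    Tm γ G x = LSVmap γ G x := by
  unfold LSVmap
  split_ifs with h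
  · exact Tm_of_lt h
  · exact Tm_of_ge (not_lt.1 h) h1

theorem Tm_ae_eq (γ : ℝ) (G : LSVBranch) : LSVmap γ G =ᵐ[mI] Tm γ G := by
  filter_upwards [ae_mem_Ioo] with x hx
  exact (Tm_eq hx.2.le).symm

theorem branch_pow {γ x : ℝ} (hx : 0 ≤ x) : (2 : ℝ) ^ γ * x ^ γ = (2 * x) ^ γ :=
  (Real.mul_rpow (by norm_num) hx).symm

theorem branch_strictMono {γ : ℝ} (hγ : 0 < γ) :
    StrictMonoOn (fun x : ℝ => x * (1 + 2 ^ γ * x ^ γ)) (Ici 0) := by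
  intro x hx y hy hxy
  have hx0 : 0 ≤ x := hx
  have h1 : x ^ γ ≤ y ^ γ := Real.rpow_le_rpow hx hxy.le hγ.le
  have h2 : 0 ≤ x ^ γ := Real.rpow_nonneg hx _
  have h3 : (0 : ℝ) < 2 ^ γ := by positivity
  have h4 : (2 : ℝ) ^ γ * x ^ γ ≤ 2 ^ γ * y ^ γ := by gcongr
  have h5 : 0 ≤ (2 : ℝ) ^ γ * x ^ γ := by positivity
  show x * (1 + 2 ^ γ * x ^ γ) < y * (1 + 2 ^ γ * y ^ γ)
  nlinarith

theorem branch_mem {γ : ℝ} (hγ : 0 < γ) {x : ℝ} (hx : x ∈ Ioo (0 : ℝ) (1 / 2)) :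
    x * (1 + 2 ^ γ * x ^ γ) ∈ Ioo (0 : ℝ) 1 := by
  rw [branch_pow hx.1.le]
  have h1 : (2 * x) ^ γ < 1 := Real.rpow_lt_one (by linarith [hx.1]) (by linarith [hx.2]) hγ
  have h2 : 0 < (2 * x) ^ γ := Real.rpow_pos_of_pos (by linarith [hx.1]) _
  have := hx.1
  have := hx.2
  constructor
  · positivity
  · nlinarith

theorem branch_hasDeriv (γ : ℝ) {x : ℝ} (hx : 0 < x) :
    HasDerivAt (fun x : ℝ => x * (1 + 2 ^ γ * x ^ γ)) (1 + (1 + γ) * 2 ^ γ * x ^ γ) x := by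
  have h := (hasDerivAt_id x).mul
    (((Real.hasDerivAt_rpow_const (p := γ) (Or.inl hx.ne')).const_mul ((2 : ℝ) ^ γ)).const_add 1)
  refine h.congr_deriv ?_
  have : x * x ^ (γ - 1) = x ^ γ := by
    rw [Real.rpow_sub_one hx.ne']; field_simp
  simp only [id]
  linear_combination (2 ^ γ * γ) * this

theorem LSVBranch.le_map (G : LSVBranch) {x : ℝ} (hx : x ∈ Icc (1 / 2 : ℝ) 1) :
    x - 1 / 2 ≤ G.g x := by
  have hm : MonotoneOn (fun y => G.g y - y) (Icc (1 / 2 : ℝ) 1) := by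
    refine monotoneOn_of_hasDerivWithinAt_nonneg (f' := fun y => G.g' y - 1) (convex_Icc _ _)
      (G.continuousOn.sub continuousOn_id) (fun y hy => ?_) (fun y hy => ?_)
    · exact ((G.hasDeriv y (interior_subset hy)).mono interior_subset).sub (hasDerivWithinAt_id _ _)
    · linarith [G.deriv_gt_one y (interior_subset hy)]
  have := hm (left_mem_Icc.2 (by norm_num)) hx hx.1
  simp only [G.map_half] at this
  linarith

/-- Change of variables on a single injective branch `T : S → T '' S` with inverse `w`: the weighted
pull-back by `w` is the density of the push-forward. -/
theorem branch_duality {S : Set ℝ} (hS : MeasurableSet S) {T T' w φ : ℝ → ℝ} (hT : Measurable T)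
    (hd : ∀ x ∈ S, HasDerivWithinAt T (T' x) S x) (hpos : ∀ x ∈ S, 0 < T' x)
    (hw : ∀ x ∈ S, w (T x) = x) (hφ : IntegrableOn φ S) :
    IntegrableOn (fun y => φ (w y) / T' (w y)) (T '' S) ∧
      ∀ A, MeasurableSet A →
        ∫ y in T '' S ∩ A, φ (w y) / T' (w y) = ∫ x in S ∩ T ⁻¹' A, φ x := by
  have hinj : InjOn T S := fun x hx y hy h => by rw [← hw x hx, ← hw y hy, h]
  have key : ∀ x ∈ S, |T' x| • (φ (w (T x)) / T' (w (T x))) = φ x := by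
    intro x hx
    rw [hw x hx, abs_of_pos (hpos x hx), smul_eq_mul, mul_div_cancel₀ _ (hpos x hx).ne']
  constructor
  · rw [integrableOn_image_iff_integrableOn_abs_deriv_smul hS hd hinj]
    exact hφ.congr_fun (fun x hx => (key x hx).symm) hS
  · intro A hA
    have hSA : MeasurableSet (S ∩ T ⁻¹' A) := hS.inter (hT hA)
    rw [← image_inter_preimage, integral_image_eq_integral_abs_deriv_smul hSA
      (fun x hx => (hd x hx.1).mono inter_subset_left) (hinj.mono inter_subset_left)]
    exact setIntegral_congr_fun hSA fun x hx => key x hx.1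

end

noncomputable section

/-! ### The transfer operator on decreasing densities -/

/-- The weighted transfer operator of one LSV-type map preserves nonnegative decreasing integrable
functions.  This is where Assumption (A) enters. -/
theorem transfer_one {γ : ℝ} (hγ : 0 < γ) {G : LSVBranch} {p : ℝ → ℝ} (hA : AssumptionA γ G p)
    (hpm : Measurable p) (hp : ∀ x ∈ Icc (0 : ℝ) 1, p x ∈ Icc (0 : ℝ) 1) {u : ℝ → ℝ}
    (hu : Integrable u mI) (hu0 : ∀ x ∈ Ioo (0 : ℝ) 1, 0 ≤ u x)
    (hanti : AntitoneOn u (Ioo (0 : ℝ) 1)) :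
    ∃ w : ℝ → ℝ, Integrable w mI ∧ (∀ x ∈ Ioo (0 : ℝ) 1, 0 ≤ w x) ∧
      AntitoneOn w (Ioo (0 : ℝ) 1) ∧
      ∀ A, MeasurableSet A → ∫ y in A, w y ∂mI = ∫ x in Tm γ G ⁻¹' A, p x * u x ∂mI := by
  obtain ⟨v1, v2, hv1, hv2, ha1, ha2⟩ := hA
  set T := Tm γ G with hTdef
  set D := LSVderiv γ G with hD
  have hTm : Measurable T := Tm_measurable γ G
  have hT1 : ∀ x ∈ Ioo (0 : ℝ) (1 / 2), T x = x * (1 + 2 ^ γ * x ^ γ) := fun x hx => Tm_of_lt hx.2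
  have hT2 : ∀ x ∈ Ioo (1 / 2 : ℝ) 1, T x = G.g x := fun x hx => Tm_of_ge hx.1.le hx.2.le
  have hsub : ∀ x ∈ Ioo (1 / 2 : ℝ) 1, x ∈ Icc (1 / 2 : ℝ) 1 := fun x hx => Ioo_subset_Icc_self hx
  -- the inverse branches
  have hv1mem : ∀ y ∈ Ioo (0 : ℝ) 1, v1 y ∈ Ioo (0 : ℝ) (1 / 2) := by
    intro y hy
    obtain ⟨h1, h2⟩ := hv1 y ⟨hy.1.le, hy.2⟩
    refine ⟨lt_of_le_of_ne h1.1 fun h0 => ?_, h1.2⟩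
    rw [← h0] at h2
    simp [LSVmap] at h2
    exact hy.1.ne h2
  have hTv1 : ∀ y ∈ Ioo (0 : ℝ) 1, v1 y * (1 + 2 ^ γ * v1 y ^ γ) = y := by
    intro y hy
    have := (hv1 y ⟨hy.1.le, hy.2⟩).2
    rwa [LSVmap, if_pos (hv1mem y hy).2] at this
  have hsm := branch_strictMono hγ
  have hv1mono : MonotoneOn v1 (Ioo (0 : ℝ) 1) := by
    intro x hx y hy hxy
    refine (hsm.le_iff_le (hv1mem x hx).1.le (hv1mem y hy).1.le).1 ?_
    simpa only [hTv1 x hx, hTv1 y hy] using hxy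
  have hw1 : ∀ x ∈ Ioo (0 : ℝ) (1 / 2), v1 (T x) = x := by
    intro x hx
    have hm : T x ∈ Ioo (0 : ℝ) 1 := by rw [hT1 x hx]; exact branch_mem hγ hx
    refine hsm.injOn (hv1mem _ hm).1.le hx.1.le ?_
    simp only [hTv1 _ hm]
    exact hT1 x hx
  have him1 : T '' Ioo (0 : ℝ) (1 / 2) = Ioo 0 1 := by
    ext y
    constructor
    · rintro ⟨x, hx, rfl⟩
      rw [hT1 x hx]; exact branch_mem hγ hx
    · intro hy
      exact ⟨v1 y, hv1mem y hy, by rw [hT1 _ (hv1mem y hy), hTv1 y hy]⟩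
  have hw2 : ∀ x ∈ Ioo (1 / 2 : ℝ) 1, v2 (T x) = x := by
    intro x hx
    obtain ⟨h1, h2⟩ := hv2 (G.g x) ⟨x, hsub x hx, rfl⟩
    rw [hT2 x hx]
    exact G.strictMono.injOn h1 (hsub x hx) h2
  set R := T '' Ioo (1 / 2 : ℝ) 1 with hR
  have hRsub : R ⊆ Ioo 0 1 := by
    rintro _ ⟨x, hx, rfl⟩
    rw [hT2 x hx]
    have h0 := G.strictMono (left_mem_Icc.2 (by norm_num)) (hsub x hx) hx.1
    have h1 := G.strictMono (hsub x hx) (right_mem_Icc.2 (by norm_num)) hx.2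
    rw [G.map_half] at h0
    exact ⟨h0, h1.trans_le (G.mapsTo (right_mem_Icc.2 (by norm_num))).2⟩
  have hRg : R ⊆ G.g '' Icc (1 / 2 : ℝ) 1 := by
    rintro _ ⟨x, hx, rfl⟩
    exact ⟨x, hsub x hx, (hT2 x hx).symm⟩
  have hRlower : ∀ x ∈ Ioo (0 : ℝ) 1, ∀ y ∈ R, x ≤ y → x ∈ R := by
    rintro x hx _ ⟨z, hz, rfl⟩ hxz
    rw [hT2 z hz] at hxz
    have hc : ContinuousOn G.g (Icc (1 / 2) z) :=
      G.continuousOn.mono (Icc_subset_Icc_right hz.2.le)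
    obtain ⟨t, ht, htx⟩ := intermediate_value_Icc hz.1.le hc ⟨by rw [G.map_half]; exact hx.1.le, hxz⟩
    have ht2 : t ∈ Ioo (1 / 2 : ℝ) 1 := by
      refine ⟨lt_of_le_of_ne ht.1 fun h => ?_, ht.2.trans_lt hz.2⟩
      rw [← h, G.map_half] at htx
      exact hx.1.ne htx
    exact ⟨t, ht2, by rw [hT2 t ht2, htx]⟩
  have hv2mem : ∀ y ∈ R, v2 y ∈ Ioo (1 / 2 : ℝ) 1 := by
    rintro _ ⟨x, hx, rfl⟩
    rw [hw2 x hx]; exact hx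
  have hv2mono : MonotoneOn v2 R := by
    rintro _ ⟨x, hx, rfl⟩ _ ⟨y, hy, rfl⟩ hxy
    rw [hw2 x hx, hw2 y hy]
    rw [hT2 x hx, hT2 y hy] at hxy
    exact (G.strictMono.le_iff_le (hsub x hx) (hsub y hy)).1 hxy
  -- derivatives on the two branches
  have hD1 : ∀ x ∈ Ioo (0 : ℝ) (1 / 2), D x = 1 + (1 + γ) * 2 ^ γ * x ^ γ := fun x hx => if_pos hx.2
  have hD2 : ∀ x ∈ Ioo (1 / 2 : ℝ) 1, D x = G.g' x := fun x hx => if_neg (not_lt.2 hx.1.le)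
  have hDpos1 : ∀ x ∈ Ioo (0 : ℝ) (1 / 2), 0 < D x := by
    intro x hx
    rw [hD1 x hx]
    have := Real.rpow_pos_of_pos hx.1 γ
    positivity
  have hDpos2 : ∀ x ∈ Ioo (1 / 2 : ℝ) 1, 0 < D x := by
    intro x hx
    rw [hD2 x hx]
    linarith [G.deriv_gt_one x (hsub x hx)]
  have hd1 : ∀ x ∈ Ioo (0 : ℝ) (1 / 2), HasDerivWithinAt T (D x) (Ioo (0 : ℝ) (1 / 2)) x := by
    intro x hx
    rw [hD1 x hx]
    exact (branch_hasDeriv γ hx.1).hasDerivWithinAt.congr hT1 (hT1 x hx)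
  have hd2 : ∀ x ∈ Ioo (1 / 2 : ℝ) 1, HasDerivWithinAt T (D x) (Ioo (1 / 2 : ℝ) 1) x := by
    intro x hx
    rw [hD2 x hx]
    exact ((G.hasDeriv x (hsub x hx)).mono Ioo_subset_Icc_self).congr hT2 (hT2 x hx)
  have hIcc1 : ∀ x ∈ Ioo (0 : ℝ) (1 / 2), x ∈ Ioo (0 : ℝ) 1 :=
    fun x hx => ⟨hx.1, by linarith [hx.2]⟩
  have hIcc2 : ∀ x ∈ Ioo (1 / 2 : ℝ) 1, x ∈ Ioo (0 : ℝ) 1 :=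
    fun x hx => ⟨by linarith [hx.1], hx.2⟩
  set φ : ℝ → ℝ := fun x => p x * u x with hφ
  have hφint : IntegrableOn φ (Ioo 0 1) := by
    have : Integrable φ mI := by
      refine hu.bdd_mul (c := 1) hpm.aestronglyMeasurable ?_
      filter_upwards [ae_mem_Ioo] with x hx
      have := hp x (Ioo_subset_Icc_self hx)
      rw [Real.norm_eq_abs, abs_le]
      exact ⟨by linarith [this.1], this.2⟩
    rwa [mI_eq] at this
  obtain ⟨hint1, hdual1⟩ := branch_duality measurableSet_Ioo hTm hd1 hDpos1 hw1
    (hφint.mono_set hIcc1)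
  obtain ⟨hint2, hdual2⟩ := branch_duality measurableSet_Ioo hTm hd2 hDpos2 hw2
    (hφint.mono_set hIcc2)
  rw [him1] at hint1 hdual1
  have hRmeas : MeasurableSet R := by
    refine measurableSet_Ioo.image_of_continuousOn_injOn
      (fun x hx => (hd2 x hx).continuousWithinAt) fun x hx y hy h => ?_
    rw [← hw2 x hx, ← hw2 y hy, h]
  set a : ℝ → ℝ := fun y => φ (v1 y) / D (v1 y) with ha
  set b : ℝ → ℝ := fun y => φ (v2 y) / D (v2 y) with hb
  have hintb : IntegrableOn (R.indicator b) (Ioo 0 1) := by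
    have : Integrable (R.indicator b) := (integrable_indicator_iff hRmeas).2 hint2
    exact this.integrableOn
  have hpu : ∀ x ∈ Ioo (0 : ℝ) 1, 0 ≤ p x := fun x hx => (hp x (Ioo_subset_Icc_self hx)).1
  have ha0 : ∀ y ∈ Ioo (0 : ℝ) 1, 0 ≤ a y := by
    intro y hy
    have h := hv1mem y hy
    exact div_nonneg (mul_nonneg (hpu _ (hIcc1 _ h)) (hu0 _ (hIcc1 _ h))) (hDpos1 _ h).le
  have hb0 : ∀ y ∈ R, 0 ≤ b y := by
    intro y hy
    have h := hv2mem y hy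
    exact div_nonneg (mul_nonneg (hpu _ (hIcc2 _ h)) (hu0 _ (hIcc2 _ h))) (hDpos2 _ h).le
  refine ⟨fun y => a y + R.indicator b y, ?_, ?_, ?_, ?_⟩
  · rw [mI_eq]; exact hint1.add hintb
  · intro y hy
    exact add_nonneg (ha0 y hy) (indicator_nonneg hb0 y)
  · intro x hx y hy hxy
    have hk1 := ha1 ⟨hx.1.le, hx.2⟩ ⟨hy.1.le, hy.2⟩ hxy
    have hux := hanti (hIcc1 _ (hv1mem x hx)) (hIcc1 _ (hv1mem y hy)) (hv1mono hx hy hxy)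
    have hu0y := hu0 _ (hIcc1 _ (hv1mem y hy))
    have hkx0 : 0 ≤ p (v1 x) / D (v1 x) :=
      div_nonneg (hpu _ (hIcc1 _ (hv1mem x hx))) (hDpos1 _ (hv1mem x hx)).le
    have eqa : ∀ z, a z = p (v1 z) / D (v1 z) * u (v1 z) := fun z => by
      simp only [ha, hφ]; ring
    have eqb : ∀ z, b z = p (v2 z) / D (v2 z) * u (v2 z) := fun z => by
      simp only [hb, hφ]; ring
    simp only at hk1
    by_cases hyR : y ∈ R
    · have hxR := hRlower x hx y hyR hxy
      have hk2 := ha2 (hRg hxR) (hRg hyR) hxy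
      simp only at hk2
      have huv := hanti (hIcc2 _ (hv2mem x hxR)) (hIcc2 _ (hv2mem y hyR)) (hv2mono hxR hyR hxy)
      have hu12 := hanti (hIcc1 _ (hv1mem y hy)) (hIcc2 _ (hv2mem y hyR))
        ((hv1mem y hy).2.le.trans (hv2mem y hyR).1.le)
      have hu0y2 := hu0 _ (hIcc2 _ (hv2mem y hyR))
      have hkx20 : 0 ≤ p (v2 x) / D (v2 x) :=
        div_nonneg (hpu _ (hIcc2 _ (hv2mem x hxR))) (hDpos2 _ (hv2mem x hxR)).le
      simp only [indicator_of_mem hyR, indicator_of_mem hxR, eqa, eqb]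
      nlinarith [mul_nonneg hkx0 (sub_nonneg.2 hux), mul_nonneg hkx20 (sub_nonneg.2 huv),
        mul_nonneg (sub_nonneg.2 hk1) (sub_nonneg.2 hu12),
        mul_nonneg (sub_nonneg.2 hk2) hu0y2]
    · have hb0x := indicator_nonneg hb0 x
      simp only [indicator_of_notMem hyR, eqa, add_zero]
      nlinarith [mul_nonneg hkx0 (sub_nonneg.2 hux), mul_nonneg (sub_nonneg.2 hk1) hu0y]
  · intro A hAm
    have hAm' : MeasurableSet (T ⁻¹' A) := hTm hAm
    rw [mI_eq, Measure.restrict_restrict hAm, Measure.restrict_restrict hAm', inter_comm A,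
      inter_comm (T ⁻¹' A), integral_add (hint1.mono_set inter_subset_left)
      (hintb.mono_set inter_subset_left), hdual1 A hAm, setIntegral_indicator hRmeas]
    have e1 : Ioo (0 : ℝ) 1 ∩ A ∩ R = R ∩ A := by
      ext y; constructor
      · rintro ⟨⟨_, h2⟩, h3⟩; exact ⟨h3, h2⟩
      · rintro ⟨h3, h2⟩; exact ⟨⟨hRsub h3, h2⟩, h3⟩
    rw [e1, hdual2 A hAm, ← setIntegral_union _ (measurableSet_Ioo.inter hAm')
      (hφint.mono_set fun x hx => hIcc1 x hx.1) (hφint.mono_set fun x hx => hIcc2 x hx.1)]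
    · refine setIntegral_congr_set ?_
      have hne : ∀ᵐ x : ℝ, x ≠ 1 / 2 := by
        simp [ae_iff]
      filter_upwards [hne] with x hx
      refine propext ⟨?_, ?_⟩
      · rintro (h | h)
        · exact ⟨hIcc1 x h.1, h.2⟩
        · exact ⟨hIcc2 x h.1, h.2⟩
      · rintro ⟨h1, h2⟩
        rcases lt_or_gt_of_ne hx with h | h
        · exact Or.inl ⟨⟨h1.1, h⟩, h2⟩
        · exact Or.inr ⟨⟨h, h1.2⟩, h2⟩
    · rw [Set.disjoint_left]
      rintro x ⟨h1, _⟩ ⟨h2, _⟩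
      exact absurd h1.2 (not_lt.2 h2.1.le)

end

noncomputable section

/-! ### The invariant cone -/

/-- Decreasing probability densities on `(0,1)` whose mass near `0` is controlled by
`C x ^ (1 - α)`; a normalised version of `InCone` on the open interval. -/
structure DensCone (α C : ℝ) (u : ℝ → ℝ) : Prop where
  int : Integrable u mI
  nonneg : ∀ x ∈ Ioo (0 : ℝ) 1, 0 ≤ u x
  anti : AntitoneOn u (Ioo (0 : ℝ) 1)
  one : ∫ x, u x ∂mI = 1
  bd : ∀ x ∈ Ioo (0 : ℝ) 1, ∫ y in Iio x, u y ∂mI ≤ C * x ^ (1 - α)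

/-- The cone constant `8 / (1 - α)` absorbs the contribution of the second branch. -/
theorem cone_arith {α v : ℝ} (hα0 : 0 < α) (hα1 : α < 1) (hv : v ∈ Ioo (0 : ℝ) (1 / 2)) :
    8 / (1 - α) * v ^ (1 - α) + 2 * (v * (1 + 2 ^ α * v ^ α)) ≤
      8 / (1 - α) * (v * (1 + 2 ^ α * v ^ α)) ^ (1 - α) := by
  obtain ⟨hv0, hv1⟩ := hv
  have h1α : 0 < 1 - α := by linarith
  set t : ℝ := 2 ^ α * v ^ α with ht
  have ht0 : 0 < t := by positivity
  have ht1 : t ≤ 1 := by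
    rw [ht, branch_pow hv0.le]
    exact Real.rpow_le_one (by linarith) (by linarith) hα0.le
  have hbern : (1 + t) ^ α ≤ 1 + α * t :=
    rpow_one_add_le_one_add_mul_self (by linarith) hα0.le hα1.le
  have hq0 : 0 < (1 + t) ^ α := by positivity
  have hlow : 1 + (1 - α) * t / 2 ≤ (1 + t) ^ (1 - α) := by
    rw [Real.rpow_sub (by linarith), Real.rpow_one, le_div_iff₀ hq0]
    have hαt : α * t ≤ 1 := by nlinarith
    have : 0 ≤ (1 - α) * t * (1 - α * t) :=
      mul_nonneg (mul_nonneg h1α.le ht0.le) (by linarith)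
    have h2 : 0 < 1 + (1 - α) * t / 2 := by positivity
    nlinarith [mul_le_mul_of_nonneg_left hbern h2.le]
  have hvt : v ≤ v ^ (1 - α) * t := by
    have e : v ^ (1 - α) * t = 2 ^ α * v := by
      rw [ht, show v ^ (1 - α) * (2 ^ α * v ^ α) = 2 ^ α * (v ^ (1 - α) * v ^ α) by ring,
        ← Real.rpow_add hv0]
      simp
    rw [e]
    have : (1 : ℝ) ≤ 2 ^ α := Real.one_le_rpow (by norm_num) hα0.le
    nlinarith
  have hV : 0 < v ^ (1 - α) := by positivity
  rw [Real.mul_rpow hv0.le (by linarith)]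
  have h3 : v ^ (1 - α) + (1 - α) * v / 2 ≤ v ^ (1 - α) * (1 + t) ^ (1 - α) := by
    nlinarith [mul_le_mul_of_nonneg_left hlow hV.le, mul_le_mul_of_nonneg_left hvt h1α.le]
  have hC : 0 < 8 / (1 - α) := by positivity
  have h4 := mul_le_mul_of_nonneg_left h3 hC.le
  have h5 : 8 / (1 - α) * ((1 - α) * v / 2) = 4 * v := by field_simp; norm_num
  nlinarith

theorem DensCone.le_two {α C : ℝ} {u : ℝ → ℝ} (hu : DensCone α C u) {x : ℝ}
    (hx : x ∈ Ico (1 / 2 : ℝ) 1) : u x ≤ 2 := by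
  have h0 : (1 / 2 : ℝ) ∈ Ioo (0 : ℝ) 1 := by norm_num
  have h1 : u x ≤ u (1 / 2) := hu.anti h0 ⟨by linarith [hx.1], hx.2⟩ hx.1
  have hint := hu.int
  have hone := hu.one
  rw [mI_eq] at hint hone
  have hsub : Ioo (0 : ℝ) (1 / 2) ⊆ Ioo 0 1 := Ioo_subset_Ioo_right (by norm_num)
  have h2 : ∫ y in Ioo (0 : ℝ) (1 / 2), u (1 / 2) ≤ ∫ y in Ioo (0 : ℝ) (1 / 2), u y := by
    refine setIntegral_mono_on (by simp) (hint.mono_measure (Measure.restrict_mono hsub le_rfl))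
      measurableSet_Ioo fun y hy => ?_
    exact hu.anti (hsub hy) h0 hy.2.le
  have h3 : ∫ y in Ioo (0 : ℝ) (1 / 2), u y ≤ ∫ y in Ioo (0 : ℝ) 1, u y := by
    refine setIntegral_mono_set hint ?_ hsub.eventuallyLE
    filter_upwards [ae_restrict_mem measurableSet_Ioo] with y hy using hu.nonneg y hy
  simp at h2
  norm_num at h1 h2 h3
  linarith

theorem DensCone.pointwise {α C : ℝ} {u : ℝ → ℝ} (hu : DensCone α C u) {x : ℝ}
    (hx : x ∈ Ioo (0 : ℝ) 1) : u x ≤ C * x ^ (-α) := by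
  have hint := hu.int
  have hbd := hu.bd x hx
  have hsub : Ioo (0 : ℝ) x ⊆ Ioo 0 1 := Ioo_subset_Ioo_right hx.2.le
  have e : Iio x ∩ Ioo (0 : ℝ) 1 = Ioo 0 x := by
    ext y; constructor
    · rintro ⟨h1, h2⟩; exact ⟨h2.1, h1⟩
    · rintro h; exact ⟨h.2, hsub h⟩
  rw [mI_eq] at hint hbd
  rw [Measure.restrict_restrict measurableSet_Iio, e] at hbd
  have h2 : ∫ y in Ioo (0 : ℝ) x, u x ≤ ∫ y in Ioo (0 : ℝ) x, u y := by
    refine setIntegral_mono_on (by simp) (hint.mono_measure (Measure.restrict_mono hsub le_rfl))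
      measurableSet_Ioo fun y hy => ?_
    exact hu.anti (hsub hy) hx hy.2.le
  simp [max_eq_left hx.1.le] at h2
  have h3 : x ^ (1 - α) = x * x ^ (-α) := by
    rw [sub_eq_add_neg, Real.rpow_add hx.1, Real.rpow_one]
  rw [h3] at hbd
  refine le_of_mul_le_mul_left (a := x) ?_ hx.1
  linarith

theorem cone_const {α C : ℝ} (hα0 : 0 < α) (hC : 1 ≤ C) : DensCone α C (fun _ => 1) where
  int := integrable_const 1
  nonneg := fun _ _ => zero_le_one
  anti := fun _ _ _ _ _ => le_rfl
  one := by simp [mI]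
  bd := by
    intro x hx
    have e : Iio x ∩ Ioo (0 : ℝ) 1 = Ioo 0 x := by
      ext y; constructor
      · rintro ⟨h1, h2⟩; exact ⟨h2.1, h1⟩
      · rintro h; exact ⟨h.2, h.1, h.2.trans hx.2⟩
    rw [mI_eq, Measure.restrict_restrict measurableSet_Iio, e]
    have h1 : x ≤ x ^ (1 - α) := by
      conv_lhs => rw [← Real.rpow_one x]
      exact Real.rpow_le_rpow_of_exponent_ge hx.1 hx.2.le (by linarith)
    simp [max_eq_left hx.1.le]
    nlinarith [hx.1]

theorem integrable_prob_mul {p u : ℝ → ℝ} (hpm : Measurable p)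
    (hp : ∀ x ∈ Icc (0 : ℝ) 1, p x ∈ Icc (0 : ℝ) 1) (hu : Integrable u mI) :
    Integrable (fun x => p x * u x) mI := by
  refine hu.bdd_mul (c := 1) hpm.aestronglyMeasurable ?_
  filter_upwards [ae_mem_Ioo] with x hx
  have := hp x (Ioo_subset_Icc_self hx)
  rw [Real.norm_eq_abs, abs_le]
  exact ⟨by linarith [this.1], this.2⟩

/-- The transfer operator of the random map preserves the cone, with a constant that does not depend
on the exponent `β ≤ α` of the second map. -/
theorem cone_step {α β : ℝ} (hα0 : 0 < α) (hα1 : α < 1) (hβ0 : 0 < β) (hβα : β ≤ α)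
    {G1 G2 : LSVBranch} {p1 p2 : ℝ → ℝ} (hp : ProbPair p1 p2)
    (hA1 : AssumptionA α G1 p1) (hA2 : AssumptionA β G2 p2) {u : ℝ → ℝ}
    (hu : DensCone α (8 / (1 - α)) u) :
    ∃ w, DensCone α (8 / (1 - α)) w ∧ ∀ A, MeasurableSet A →
      ∫ y in A, w y ∂mI = ∫ x in Tm α G1 ⁻¹' A, p1 x * u x ∂mI
        + ∫ x in Tm β G2 ⁻¹' A, p2 x * u x ∂mI := by
  obtain ⟨hm1, hm2, hp01, hsum⟩ := hp
  obtain ⟨w1, hi1, hn1, ha1, hd1⟩ := transfer_one hα0 hA1 hm1 (fun x hx => (hp01 x hx).1)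
    hu.int hu.nonneg hu.anti
  obtain ⟨w2, hi2, hn2, ha2, hd2⟩ := transfer_one hβ0 hA2 hm2 (fun x hx => (hp01 x hx).2)
    hu.int hu.nonneg hu.anti
  have hI1 := integrable_prob_mul hm1 (fun x hx => (hp01 x hx).1) hu.int
  have hI2 := integrable_prob_mul hm2 (fun x hx => (hp01 x hx).2) hu.int
  have hdual : ∀ A, MeasurableSet A →
      ∫ y in A, (w1 y + w2 y) ∂mI = ∫ x in Tm α G1 ⁻¹' A, p1 x * u x ∂mI
        + ∫ x in Tm β G2 ⁻¹' A, p2 x * u x ∂mI := by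
    intro A hA
    rw [integral_add hi1.integrableOn hi2.integrableOn, hd1 A hA, hd2 A hA]
  have hsumu : ∀ᵐ x ∂mI, p1 x * u x + p2 x * u x = u x := by
    filter_upwards [ae_mem_Ioo] with x hx
    rw [← add_mul, hsum x (Ioo_subset_Icc_self hx), one_mul]
  refine ⟨fun y => w1 y + w2 y, ⟨hi1.add hi2, fun x hx => add_nonneg (hn1 x hx) (hn2 x hx),
    ha1.add ha2, ?_, ?_⟩, hdual⟩
  · have h := hdual univ MeasurableSet.univ
    simp only [preimage_univ, Measure.restrict_univ] at h
    rw [h, ← integral_add hI1 hI2, integral_congr_ae hsumu, hu.one]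
  · intro x hx
    rw [hdual _ measurableSet_Iio]
    obtain ⟨v1, -, hv1, -⟩ := hA1
    obtain ⟨hvm, hvx⟩ := hv1 x ⟨hx.1.le, hx.2⟩
    set v := v1 x with hv
    have hv0 : 0 < v := by
      refine lt_of_le_of_ne hvm.1 fun h0 => ?_
      rw [← h0] at hvx
      simp [LSVmap] at hvx
      exact hx.1.ne hvx
    rw [LSVmap, if_pos hvm.2] at hvx
    set Q : Set ℝ := Iio v ∪ Ico (1 / 2) (1 / 2 + x) with hQ
    have hQm : MeasurableSet Q := measurableSet_Iio.union measurableSet_Ico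
    have hgen : ∀ (γ : ℝ) (G : LSVBranch), 0 < γ → γ ≤ α → ∀ y ∈ Ioo (0 : ℝ) 1,
        y ∈ Tm γ G ⁻¹' Iio x → y ∈ Q := by
      intro γ G hγ0 hγα y hy hyx
      rcases lt_or_ge y (1 / 2) with h | h
      · left
        have hyx' : y * (1 + 2 ^ γ * y ^ γ) < x := by
          have : Tm γ G y < x := hyx
          rwa [Tm_of_lt h] at this
        refine ((branch_strictMono hα0).lt_iff_lt hy.1.le hvm.1).1 ?_
        simp only [hvx]
        refine lt_of_le_of_lt ?_ hyx'
        rw [branch_pow hy.1.le, branch_pow hy.1.le]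
        have := Real.rpow_le_rpow_of_exponent_ge (x := 2 * y) (by linarith [hy.1]) (by linarith) hγα
        have := hy.1
        gcongr
      · right
        have hyx' : Tm γ G y < x := hyx
        rw [Tm_of_ge h hy.2.le] at hyx'
        exact ⟨h, by linarith [G.le_map ⟨h, hy.2.le⟩]⟩
    have hle : ∀ (γ : ℝ) (G : LSVBranch), 0 < γ → γ ≤ α → ∀ p : ℝ → ℝ,
        (∀ x ∈ Icc (0 : ℝ) 1, p x ∈ Icc (0 : ℝ) 1) → Integrable (fun x => p x * u x) mI →
        ∫ y in Tm γ G ⁻¹' Iio x, p y * u y ∂mI ≤ ∫ y in Q, p y * u y ∂mI := by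
      intro γ G hγ0 hγα p hp hpi
      refine setIntegral_mono_set hpi.integrableOn ?_ ?_
      · filter_upwards [ae_restrict_of_ae ae_mem_Ioo] with y hy
        exact mul_nonneg (hp y (Ioo_subset_Icc_self hy)).1 (hu.nonneg y hy)
      · filter_upwards [ae_mem_Ioo] with y hy using hgen γ G hγ0 hγα y hy
    have h1 := hle α G1 hα0 le_rfl p1 (fun x hx => (hp01 x hx).1) hI1
    have h2 := hle β G2 hβ0 hβα p2 (fun x hx => (hp01 x hx).2) hI2
    have h3 : ∫ y in Q, p1 y * u y ∂mI + ∫ y in Q, p2 y * u y ∂mI = ∫ y in Q, u y ∂mI := by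
      rw [← integral_add hI1.integrableOn hI2.integrableOn]
      exact integral_congr_ae (ae_restrict_of_ae hsumu)
    have h4 : ∫ y in Q, u y ∂mI = ∫ y in Iio v, u y ∂mI
        + ∫ y in Ico (1 / 2) (1 / 2 + x), u y ∂mI := by
      refine setIntegral_union ?_ measurableSet_Ico hu.int.integrableOn hu.int.integrableOn
      rw [Set.disjoint_left]
      intro y h1 h2
      exact absurd (lt_trans h1 hvm.2) (not_lt.2 h2.1)
    have h5 : ∫ y in Ico (1 / 2) (1 / 2 + x), u y ∂mI ≤ 2 * x := by
      have e1 : ∫ y in Ico (1 / 2) (1 / 2 + x), u y ∂mI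
          ≤ ∫ y in Ico (1 / 2) (1 / 2 + x), (2 : ℝ) ∂mI := by
        refine setIntegral_mono_ae_restrict hu.int.integrableOn (integrable_const _) ?_
        filter_upwards [ae_restrict_of_ae ae_mem_Ioo, ae_restrict_mem measurableSet_Ico]
          with y hy hy2 using hu.le_two ⟨hy2.1, hy.2⟩
      have e2 : mI.real (Ico (1 / 2) (1 / 2 + x)) ≤ x := by
        have : mI (Ico (1 / 2) (1 / 2 + x)) ≤ ENNReal.ofReal x := by
          refine (Measure.restrict_apply_le _ _).trans ?_
          rw [Real.volume_Ico]
          apply le_of_eq; congr 1; ring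
        exact ENNReal.toReal_le_of_le_ofReal hx.1.le this
      rw [setIntegral_const, smul_eq_mul] at e1
      linarith
    have h6 := hu.bd v ⟨hv0, hvm.2.trans (by norm_num)⟩
    have h7 := cone_arith hα0 hα1 ⟨hv0, hvm.2⟩
    rw [hvx] at h7
    linarith

end

noncomputable section

/-! ### Compactness of the cone in `L¹` -/

/-- Helly selection on `(0,1)` for nonnegative decreasing functions with a common pointwise bound. -/
theorem helly {B : ℝ → ℝ} {u : ℕ → ℝ → ℝ} (hanti : ∀ n, AntitoneOn (u n) (Ioo (0 : ℝ) 1))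
    (h0 : ∀ n, ∀ x ∈ Ioo (0 : ℝ) 1, 0 ≤ u n x) (hB : ∀ n, ∀ x ∈ Ioo (0 : ℝ) 1, u n x ≤ B x) :
    ∃ φ : ℕ → ℕ, StrictMono φ ∧ ∃ h : ℝ → ℝ, AntitoneOn h (Ioo (0 : ℝ) 1) ∧
      (∀ x ∈ Ioo (0 : ℝ) 1, 0 ≤ h x) ∧
      ∀ᵐ x ∂mI, Filter.Tendsto (fun n => u (φ n) x) Filter.atTop (nhds (h x)) := by
  -- a subsequence converging at all rational points, by compactness of a countable product
  let Q := {q : ℚ // (q : ℝ) ∈ Ioo (0 : ℝ) 1}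
  have hcomp : IsCompact (Set.pi univ fun q : Q => Icc 0 (B (q.1 : ℝ))) :=
    isCompact_univ_pi fun _ => isCompact_Icc
  obtain ⟨L, hL, φ, hφ, hlim⟩ := hcomp.isSeqCompact (x := fun n (q : Q) => u n (q.1 : ℝ))
    (fun n q _ => ⟨h0 n _ q.2, hB n _ q.2⟩)
  rw [tendsto_pi_nhds] at hlim
  have hL0 : ∀ q, 0 ≤ L q := fun q => (hL q trivial).1
  let S : ℝ → Set ℝ := fun x => {y | ∃ q : Q, ((q.1 : ℚ) : ℝ) < x ∧ L q = y}
  have hSbdd : ∀ x, BddBelow (S x) := fun x => ⟨0, by rintro _ ⟨q, -, rfl⟩; exact hL0 q⟩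
  have hSne : ∀ x ∈ Ioo (0 : ℝ) 1, (S x).Nonempty := by
    intro x hx
    obtain ⟨q, hq1, hq2⟩ := exists_rat_btwn hx.1
    exact ⟨_, ⟨q, hq1, hq2.trans hx.2⟩, hq2, rfl⟩
  have hant : AntitoneOn (fun x => sInf (S x)) (Ioo (0 : ℝ) 1) := by
    intro x hx y hy hxy
    refine csInf_le_csInf (hSbdd y) (hSne x hx) ?_
    rintro _ ⟨q, hq, rfl⟩
    exact ⟨q, hq.trans_le hxy, rfl⟩
  refine ⟨φ, hφ, fun x => sInf (S x), hant, fun x hx => ?_, ?_⟩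
  · exact le_csInf (hSne x hx) (by rintro _ ⟨q, -, rfl⟩; exact hL0 q)
  -- convergence holds at every continuity point of the limit
  have hnull : ∀ᵐ x ∂mI,
      x ∉ {x ∈ Ioo (0 : ℝ) 1 | ¬ContinuousWithinAt (fun x => sInf (S x)) (Ioo (0 : ℝ) 1) x} := by
    have h := hant.countable_not_continuousWithinAt.measure_zero (volume : Measure ℝ)
    rw [mI_eq]
    exact ae_restrict_of_ae (measure_eq_zero_iff_ae_notMem.1 h)
  filter_upwards [hnull, ae_mem_Ioo] with x hxn hx
  have hc : ContinuousWithinAt (fun x => sInf (S x)) (Ioo (0 : ℝ) 1) x := by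
    by_contra hcon
    exact hxn ⟨hx, hcon⟩
  have hca : ContinuousAt (fun x => sInf (S x)) x := hc.continuousAt (Ioo_mem_nhds hx.1 hx.2)
  refine tendsto_order.2 ⟨fun a ha => ?_, fun a ha => ?_⟩
  · have hev : ∀ᶠ y in nhds x, a < sInf (S y) := hca.eventually (lt_mem_nhds ha)
    obtain ⟨l, r', hlr, hsub⟩ := mem_nhds_iff_exists_Ioo_subset.1
      (Filter.inter_mem hev (Ioo_mem_nhds hx.1 hx.2))
    obtain ⟨s, hs1, hs2⟩ := exists_between hlr.2
    obtain ⟨hs3, hs4⟩ := hsub ⟨hlr.1.trans hs1, hs2⟩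
    obtain ⟨q, hq1, hq2⟩ := exists_rat_btwn hs1
    let q' : Q := ⟨q, hx.1.trans hq1, hq2.trans hs4.2⟩
    have hLq : a < L q' := lt_of_lt_of_le hs3 (csInf_le (hSbdd s) ⟨q', hq2, rfl⟩)
    filter_upwards [(hlim q').eventually (lt_mem_nhds hLq)] with n hn
    exact lt_of_lt_of_le hn (hanti _ hx q'.2 hq1.le)
  · obtain ⟨_, ⟨q, hq, rfl⟩, hqa⟩ := exists_lt_of_csInf_lt (hSne x hx) ha
    filter_upwards [(hlim q).eventually (gt_mem_nhds hqa)] with n hn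
    exact lt_of_le_of_lt (hanti _ q.2 hx hq.le) hn

theorem weighted_diff {q u h : ℝ → ℝ} (hqm : Measurable q)
    (hq : ∀ x ∈ Icc (0 : ℝ) 1, q x ∈ Icc (0 : ℝ) 1)
    (hu : Integrable u mI) (hh : Integrable h mI) (A : Set ℝ) :
    |∫ x in A, q x * u x ∂mI - ∫ x in A, q x * h x ∂mI| ≤ ∫ x, |u x - h x| ∂mI := by
  have h1 := integrable_prob_mul hqm hq hu
  have h2 := integrable_prob_mul hqm hq hh
  have h3 : Integrable (fun x => |u x - h x|) mI := (hu.sub hh).abs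
  rw [← integral_sub h1.integrableOn h2.integrableOn]
  calc |∫ x in A, (q x * u x - q x * h x) ∂mI|
      ≤ ∫ x in A, |q x * u x - q x * h x| ∂mI := abs_integral_le_integral_abs
    _ ≤ ∫ x, |q x * u x - q x * h x| ∂mI :=
        setIntegral_le_integral (h1.sub h2).abs (Filter.Eventually.of_forall fun x => abs_nonneg _)
    _ ≤ ∫ x, |u x - h x| ∂mI := by
        refine integral_mono_ae (h1.sub h2).abs h3 ?_
        filter_upwards [ae_mem_Ioo] with x hx
        have := hq x (Ioo_subset_Icc_self hx)
        rw [← mul_sub, abs_mul, abs_of_nonneg this.1]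
        exact mul_le_of_le_one_left (abs_nonneg _) this.2

theorem tendsto_weighted {u : ℕ → ℝ → ℝ} {q h : ℝ → ℝ} (hqm : Measurable q)
    (hq : ∀ x ∈ Icc (0 : ℝ) 1, q x ∈ Icc (0 : ℝ) 1)
    (hu : ∀ n, Integrable (u n) mI) (hh : Integrable h mI)
    (hlim : Filter.Tendsto (fun n => ∫ x, |u n x - h x| ∂mI) Filter.atTop (nhds 0)) (A : Set ℝ) :
    Filter.Tendsto (fun n => ∫ x in A, q x * u n x ∂mI) Filter.atTop
      (nhds (∫ x in A, q x * h x ∂mI)) := by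
  rw [tendsto_iff_dist_tendsto_zero]
  exact squeeze_zero (fun n => dist_nonneg) (fun n => weighted_diff hqm hq (hu n) hh A) hlim

theorem tendsto_setIntegral_L1 {u : ℕ → ℝ → ℝ} {h : ℝ → ℝ}
    (hu : ∀ n, Integrable (u n) mI) (hh : Integrable h mI)
    (hlim : Filter.Tendsto (fun n => ∫ x, |u n x - h x| ∂mI) Filter.atTop (nhds 0)) (A : Set ℝ) :
    Filter.Tendsto (fun n => ∫ x in A, u n x ∂mI) Filter.atTop (nhds (∫ x in A, h x ∂mI)) := by
  simpa using tendsto_weighted (q := fun _ => 1) measurable_const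
    (fun x _ => ⟨zero_le_one, le_rfl⟩) hu hh hlim A

/-- The cone is sequentially compact in `L¹`: Helly selection combined with the common integrable
majorant `C x ^ (-α)`. -/
theorem cone_compact {α C : ℝ} (hα1 : α < 1) {u : ℕ → ℝ → ℝ} (hu : ∀ n, DensCone α C (u n)) :
    ∃ φ : ℕ → ℕ, StrictMono φ ∧ ∃ h : ℝ → ℝ, DensCone α C h ∧
      Filter.Tendsto (fun n => ∫ x, |u (φ n) x - h x| ∂mI) Filter.atTop (nhds 0) := by
  obtain ⟨φ, hφ, h, hanti, h0, hae⟩ := helly (fun n => (hu n).anti) (fun n => (hu n).nonneg)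
    (fun n x hx => (hu n).pointwise hx)
  have hBint : Integrable (fun x : ℝ => C * x ^ (-α)) mI := by
    refine Integrable.const_mul ?_ C
    have := (intervalIntegral.intervalIntegrable_rpow' (a := 0) (b := 1) (r := -α) (by linarith)).1
    rw [mI_eq]
    exact this.mono_set Ioo_subset_Ioc_self
  have hmeas : AEStronglyMeasurable h mI := by
    rw [mI_eq]
    exact (aemeasurable_restrict_of_antitoneOn measurableSet_Ioo hanti).aestronglyMeasurable
  have hle : ∀ᵐ x ∂mI, h x ≤ C * x ^ (-α) := by
    filter_upwards [hae, ae_mem_Ioo] with x hx hxm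
    exact le_of_tendsto' hx fun n => (hu _).pointwise hxm
  have hint : Integrable h mI := by
    refine hBint.mono' hmeas ?_
    filter_upwards [hle, ae_mem_Ioo] with x hx hxm
    rwa [Real.norm_eq_abs, abs_of_nonneg (h0 x hxm)]
  have hL1 : Filter.Tendsto (fun n => ∫ x, |u (φ n) x - h x| ∂mI) Filter.atTop (nhds 0) := by
    have := tendsto_integral_of_dominated_convergence (μ := mI)
      (F := fun n x => |u (φ n) x - h x|) (f := fun _ => 0) (fun x => C * x ^ (-α))
      (fun n => ((hu _).int.sub hint).abs.aestronglyMeasurable) hBint ?_ ?_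
    · simpa using this
    · intro n
      filter_upwards [hle, ae_mem_Ioo] with x hx hxm
      have h1 := (hu (φ n)).pointwise hxm
      have h2 := (hu (φ n)).nonneg x hxm
      have h3 := h0 x hxm
      rw [Real.norm_eq_abs, abs_abs, abs_le]
      constructor <;> linarith
    · filter_upwards [hae] with x hx
      simpa using (hx.sub_const (h x)).abs
  refine ⟨φ, hφ, h, ⟨hint, h0, hanti, ?_, ?_⟩, hL1⟩
  · have := tendsto_setIntegral_L1 (fun n => (hu (φ n)).int) hint hL1 univ
    simp only [Measure.restrict_univ, (hu _).one] at this
    exact (tendsto_nhds_unique this tendsto_const_nhds)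
  · intro x hx
    exact le_of_tendsto' (tendsto_setIntegral_L1 (fun n => (hu (φ n)).int) hint hL1 (Iio x))
      fun n => (hu (φ n)).bd x hx

end

noncomputable section

/-! ### Existence of an invariant density in the cone -/

/-- `h` is the density of an invariant measure of the random map `{T1, T2; p1, p2}`, phrased with
Bochner integrals over preimages of measurable sets. -/
def WInv (T1 T2 p1 p2 h : ℝ → ℝ) : Prop :=
  ∀ A, MeasurableSet A →
    ∫ x in T1 ⁻¹' A, p1 x * h x ∂mI + ∫ x in T2 ⁻¹' A, p2 x * h x ∂mI = ∫ x in A, h x ∂mI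

theorem DensCone.setIntegral_mem {α C : ℝ} {u : ℝ → ℝ} (hu : DensCone α C u) (A : Set ℝ) :
    ∫ x in A, u x ∂mI ∈ Icc (0 : ℝ) 1 := by
  have h0 : ∀ᵐ x ∂mI, 0 ≤ u x := by
    filter_upwards [ae_mem_Ioo] with x hx using hu.nonneg x hx
  constructor
  · exact integral_nonneg_of_ae (ae_restrict_of_ae h0)
  · rw [← hu.one]
    exact setIntegral_le_integral hu.int h0

theorem cone_average {α C : ℝ} {U : ℕ → ℝ → ℝ} (hU : ∀ n, DensCone α C (U n)) (n : ℕ) :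
    DensCone α C (fun x => ((n : ℝ) + 1)⁻¹ * ∑ k ∈ Finset.range (n + 1), U k x) := by
  have hn : (0 : ℝ) < (n : ℝ) + 1 := by positivity
  have hint : ∀ A : Set ℝ, ∫ x in A, ((n : ℝ) + 1)⁻¹ * ∑ k ∈ Finset.range (n + 1), U k x ∂mI
      = ((n : ℝ) + 1)⁻¹ * ∑ k ∈ Finset.range (n + 1), ∫ x in A, U k x ∂mI := by
    intro A
    rw [integral_const_mul, integral_finsetSum _ fun k _ => (hU k).int.integrableOn]
  refine ⟨(integrable_finsetSum _ fun k _ => (hU k).int).const_mul _, fun x hx => ?_, ?_, ?_, ?_⟩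
  · exact mul_nonneg (by positivity) (Finset.sum_nonneg fun k _ => (hU k).nonneg x hx)
  · intro x hx y hy hxy
    exact mul_le_mul_of_nonneg_left (Finset.sum_le_sum fun k _ => (hU k).anti hx hy hxy)
      (by positivity)
  · have := hint univ
    simp only [Measure.restrict_univ, (hU _).one] at this
    rw [this]
    simp
    field_simp
  · intro x hx
    rw [hint]
    calc ((n : ℝ) + 1)⁻¹ * ∑ k ∈ Finset.range (n + 1), ∫ y in Iio x, U k y ∂mI
        ≤ ((n : ℝ) + 1)⁻¹ * ∑ k ∈ Finset.range (n + 1), C * x ^ (1 - α) :=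
          mul_le_mul_of_nonneg_left (Finset.sum_le_sum fun k _ => (hU k).bd x hx) (by positivity)
      _ = C * x ^ (1 - α) := by
          simp
          field_simp

/-- Krylov–Bogolyubov: an `L¹` limit of the averages of the iterates of the constant density is
invariant. -/
theorem exists_inv {α β : ℝ} (hα0 : 0 < α) (hα1 : α < 1) (hβ0 : 0 < β) (hβα : β ≤ α)
    {G1 G2 : LSVBranch} {p1 p2 : ℝ → ℝ} (hp : ProbPair p1 p2)
    (hA1 : AssumptionA α G1 p1) (hA2 : AssumptionA β G2 p2) :
    ∃ h, DensCone α (8 / (1 - α)) h ∧ WInv (Tm α G1) (Tm β G2) p1 p2 h := by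
  have hC : 1 ≤ 8 / (1 - α) := by
    rw [le_div_iff₀ (by linarith)]; linarith
  choose P hPc hPd using
    fun u : {u // DensCone α (8 / (1 - α)) u} => cone_step hα0 hα1 hβ0 hβα hp hA1 hA2 u.2
  let V : ℕ → {u // DensCone α (8 / (1 - α)) u} := fun n =>
    Nat.rec ⟨fun _ => 1, cone_const hα0 hC⟩ (fun _ u => ⟨P u, hPc u⟩) n
  let U : ℕ → ℝ → ℝ := fun n => (V n).1
  have hU : ∀ n, DensCone α (8 / (1 - α)) (U n) := fun n => (V n).2
  have hstep : ∀ n A, MeasurableSet A → ∫ y in A, U (n + 1) y ∂mI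
      = ∫ x in Tm α G1 ⁻¹' A, p1 x * U n x ∂mI + ∫ x in Tm β G2 ⁻¹' A, p2 x * U n x ∂mI :=
    fun n A hA => hPd (V n) A hA
  obtain ⟨hm1, hm2, hp01, hsum⟩ := hp
  have hq1 : ∀ x ∈ Icc (0 : ℝ) 1, p1 x ∈ Icc (0 : ℝ) 1 := fun x hx => (hp01 x hx).1
  have hq2 : ∀ x ∈ Icc (0 : ℝ) 1, p2 x ∈ Icc (0 : ℝ) 1 := fun x hx => (hp01 x hx).2
  let W : ℕ → ℝ → ℝ := fun n x => ((n : ℝ) + 1)⁻¹ * ∑ k ∈ Finset.range (n + 1), U k x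
  have hW : ∀ n, DensCone α (8 / (1 - α)) (W n) := cone_average hU
  obtain ⟨φ, hφ, h, hh, hlim⟩ := cone_compact hα1 hW
  refine ⟨h, hh, fun A hA => ?_⟩
  have hWp : ∀ p : ℝ → ℝ, Measurable p → (∀ x ∈ Icc (0 : ℝ) 1, p x ∈ Icc (0 : ℝ) 1) →
      ∀ n (B : Set ℝ), ∫ x in B, p x * W n x ∂mI
        = ((n : ℝ) + 1)⁻¹ * ∑ k ∈ Finset.range (n + 1), ∫ x in B, p x * U k x ∂mI := by
    intro p hpm hp n B
    rw [← integral_finsetSum _ fun k _ => (integrable_prob_mul hpm hp (hU k).int).integrableOn,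
      ← integral_const_mul]
    refine integral_congr_ae (Filter.Eventually.of_forall fun x => ?_)
    simp only [W]
    rw [← Finset.mul_sum]
    ring
  have hWA : ∀ n, ∫ x in A, W n x ∂mI
      = ((n : ℝ) + 1)⁻¹ * ∑ k ∈ Finset.range (n + 1), ∫ x in A, U k x ∂mI := by
    intro n
    simpa using hWp (fun _ => 1) measurable_const (fun x _ => ⟨zero_le_one, le_rfl⟩) n A
  have hdefect : ∀ n, ∫ x in Tm α G1 ⁻¹' A, p1 x * W n x ∂mI
      + ∫ x in Tm β G2 ⁻¹' A, p2 x * W n x ∂mI - ∫ x in A, W n x ∂mI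
      = ((n : ℝ) + 1)⁻¹ * (∫ x in A, U (n + 1) x ∂mI - ∫ x in A, U 0 x ∂mI) := by
    intro n
    rw [hWp p1 hm1 hq1, hWp p2 hm2 hq2, hWA, ← mul_add, ← mul_sub, ← Finset.sum_add_distrib,
      ← Finset.sum_sub_distrib]
    congr 1
    refine Eq.trans ?_ (Finset.sum_range_sub (fun k => ∫ x in A, U k x ∂mI) (n + 1))
    exact Finset.sum_congr rfl fun k _ => by rw [hstep k A hA]
  have hzero : Filter.Tendsto (fun n => ∫ x in Tm α G1 ⁻¹' A, p1 x * W n x ∂mI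
      + ∫ x in Tm β G2 ⁻¹' A, p2 x * W n x ∂mI - ∫ x in A, W n x ∂mI) Filter.atTop (nhds 0) := by
    refine squeeze_zero_norm (fun n => ?_) tendsto_one_div_add_atTop_nhds_zero_nat
    rw [hdefect, norm_mul, Real.norm_eq_abs, Real.norm_eq_abs, abs_of_pos (by positivity), one_div]
    refine mul_le_of_le_one_right (by positivity) (abs_le.2 ?_)
    have h1 := (hU (n + 1)).setIntegral_mem A
    have h2 := (hU 0).setIntegral_mem A
    constructor <;> linarith [h1.1, h1.2, h2.1, h2.2]
  have hint := fun n => (hW (φ n)).int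
  have hlim2 := ((tendsto_weighted hm1 hq1 hint hh.int hlim (Tm α G1 ⁻¹' A)).add
    (tendsto_weighted hm2 hq2 hint hh.int hlim (Tm β G2 ⁻¹' A))).sub
    (tendsto_setIntegral_L1 hint hh.int hlim A)
  exact sub_eq_zero.1 (tendsto_nhds_unique hlim2 (hzero.comp hφ.tendsto_atTop))

/-! ### The limit as the perturbation vanishes -/

theorem limit_inv {α C : ℝ} {T1 : ℝ → ℝ} {T2 p1 p2 u : ℕ → ℝ → ℝ} {s : ℕ → ℝ} {h : ℝ → ℝ}
    (hp : ∀ n, ProbPair (p1 n) (p2 n)) (hs : ∀ n, ∀ x ∈ Icc (0 : ℝ) 1, p2 n x ≤ s n)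
    (hs0 : Filter.Tendsto s Filter.atTop (nhds 0)) (hu : ∀ n, DensCone α C (u n))
    (hinv : ∀ n, WInv T1 (T2 n) (p1 n) (p2 n) (u n)) (hh : DensCone α C h)
    (hlim : Filter.Tendsto (fun n => ∫ x, |u n x - h x| ∂mI) Filter.atTop (nhds 0))
    (A : Set ℝ) (hA : MeasurableSet A) :
    ∫ x in T1 ⁻¹' A, h x ∂mI = ∫ x in A, h x ∂mI := by
  have hint := fun n => (hu n).int
  have hI1 := fun n => integrable_prob_mul (hp n).1 (fun x hx => ((hp n).2.2.1 x hx).1) (hint n)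
  have hI2 := fun n => integrable_prob_mul (hp n).2.1 (fun x hx => ((hp n).2.2.1 x hx).2) (hint n)
  have hsmall : ∀ n (B : Set ℝ), ∫ x in B, p2 n x * u n x ∂mI ∈ Icc 0 (s n) := by
    intro n B
    have hnn : ∀ᵐ x ∂mI, 0 ≤ p2 n x * u n x := by
      filter_upwards [ae_mem_Ioo] with x hx
      exact mul_nonneg ((hp n).2.2.1 x (Ioo_subset_Icc_self hx)).2.1 ((hu n).nonneg x hx)
    constructor
    · exact integral_nonneg_of_ae (ae_restrict_of_ae hnn)
    · calc ∫ x in B, p2 n x * u n x ∂mI ≤ ∫ x, p2 n x * u n x ∂mI :=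
            setIntegral_le_integral (hI2 n) hnn
        _ ≤ ∫ x, s n * u n x ∂mI := by
            refine integral_mono_ae (hI2 n) ((hint n).const_mul _) ?_
            filter_upwards [ae_mem_Ioo] with x hx
            exact mul_le_mul_of_nonneg_right (hs n x (Ioo_subset_Icc_self hx)) ((hu n).nonneg x hx)
        _ = s n := by rw [integral_const_mul, (hu n).one, mul_one]
  have hdiff : ∀ n, ∫ x in T1 ⁻¹' A, u n x ∂mI - ∫ x in A, u n x ∂mI
      = ∫ x in T1 ⁻¹' A, p2 n x * u n x ∂mI - ∫ x in T2 n ⁻¹' A, p2 n x * u n x ∂mI := by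
    intro n
    have e : ∫ x in T1 ⁻¹' A, u n x ∂mI
        = ∫ x in T1 ⁻¹' A, p1 n x * u n x ∂mI + ∫ x in T1 ⁻¹' A, p2 n x * u n x ∂mI := by
      rw [← integral_add (hI1 n).integrableOn (hI2 n).integrableOn]
      refine integral_congr_ae (ae_restrict_of_ae ?_)
      filter_upwards [ae_mem_Ioo] with x hx
      rw [← add_mul, (hp n).2.2.2 x (Ioo_subset_Icc_self hx), one_mul]
    have := hinv n A hA
    linarith
  have h0 : Filter.Tendsto (fun n => ∫ x in T1 ⁻¹' A, u n x ∂mI - ∫ x in A, u n x ∂mI)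
      Filter.atTop (nhds 0) := by
    refine squeeze_zero_norm (fun n => ?_) hs0
    rw [hdiff, Real.norm_eq_abs, abs_le]
    have h1 := hsmall n (T1 ⁻¹' A)
    have h2 := hsmall n (T2 n ⁻¹' A)
    constructor <;> linarith [h1.1, h1.2, h2.1, h2.2]
  have h1 := (tendsto_setIntegral_L1 hint hh.int hlim (T1 ⁻¹' A)).sub
    (tendsto_setIntegral_L1 hint hh.int hlim A)
  exact sub_eq_zero.1 (tendsto_nhds_unique h1 h0)

/-- A decreasing invariant density of the intermittent map vanishes nowhere on `(0,1)`: if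
`c ∈ (0,1)` were the right end of its support, then points just to the left of `min c (1/2)` would
be mapped to the right of `c`. -/
theorem invariant_pos {α C : ℝ} (hα0 : 0 < α) {G : LSVBranch} {p : ℝ → ℝ}
    (hA : AssumptionA α G p) {h : ℝ → ℝ} (hh : DensCone α C h)
    (hinv : ∀ A, MeasurableSet A → ∫ x in Tm α G ⁻¹' A, h x ∂mI = ∫ x in A, h x ∂mI) :
    ∀ x ∈ Ioo (0 : ℝ) 1, 0 < h x := by
  by_contra hcon
  push Not at hcon
  obtain ⟨z, hz, hhz⟩ := hcon
  set Z : Set ℝ := {x | x ∈ Ioo (0 : ℝ) 1 ∧ h x = 0} with hZ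
  have hzZ : z ∈ Z := ⟨hz, le_antisymm hhz (hh.nonneg z hz)⟩
  have hbdd : BddBelow Z := ⟨0, fun x hx => hx.1.1.le⟩
  set c := sInf Z with hc
  have hc0 : 0 ≤ c := le_csInf ⟨z, hzZ⟩ fun x hx => hx.1.1.le
  have hc1 : c < 1 := (csInf_le hbdd hzZ).trans_lt hz.2
  have hright : ∀ x ∈ Ioo (0 : ℝ) 1, c < x → h x = 0 := by
    intro x hx hcx
    obtain ⟨y, hy, hyx⟩ := exists_lt_of_csInf_lt ⟨z, hzZ⟩ hcx
    exact le_antisymm ((hh.anti hy.1 hx hyx.le).trans hy.2.le) (hh.nonneg x hx)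
  have hzero : ∫ x in Ioi c, h x ∂mI = 0 := by
    refine integral_eq_zero_of_ae ?_
    filter_upwards [ae_restrict_of_ae ae_mem_Ioo, ae_restrict_mem measurableSet_Ioi] with x hx hcx
    exact hright x hx hcx
  have hcpos : 0 < c := by
    refine lt_of_le_of_ne hc0 fun h0 => ?_
    have : ∫ x, h x ∂mI = 0 := by
      refine integral_eq_zero_of_ae ?_
      filter_upwards [ae_mem_Ioo] with x hx
      exact hright x hx (by rw [← h0]; exact hx.1)
    rw [hh.one] at this
    exact one_ne_zero this
  obtain ⟨v1, -, hv1, -⟩ := hA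
  obtain ⟨hvm, hvx⟩ := hv1 c ⟨hc0, hc1⟩
  set v := v1 c with hv
  rw [LSVmap, if_pos hvm.2] at hvx
  have hv0 : 0 < v := by
    refine lt_of_le_of_ne hvm.1 fun h0 => ?_
    rw [← h0] at hvx
    simp at hvx
    exact hcpos.ne hvx
  have hvc : v < c := by
    rw [← hvx]
    have : 0 < (2 : ℝ) ^ α * v ^ α := by positivity
    nlinarith
  rw [← hinv _ measurableSet_Ioi] at hzero
  have hnn : 0 ≤ᵐ[mI.restrict (Tm α G ⁻¹' Ioi c)] h := by
    filter_upwards [ae_restrict_of_ae ae_mem_Ioo] with x hx using hh.nonneg x hx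
  rw [setIntegral_eq_zero_iff_of_nonneg_ae hnn hh.int.integrableOn] at hzero
  have hae := (ae_restrict_iff' (Tm_measurable α G measurableSet_Ioi)).1 hzero
  have hsub : Ioo v (min c (1 / 2)) ⊆ {x | ¬ (x ∈ Tm α G ⁻¹' Ioi c → h x = (0 : ℝ → ℝ) x)} := by
    intro x hx
    have hxc : x < c := hx.2.trans_le (min_le_left _ _)
    have hxh : x < 1 / 2 := hx.2.trans_le (min_le_right _ _)
    have hx0 : 0 < x := hv0.trans hx.1
    have hTx : x ∈ Tm α G ⁻¹' Ioi c := by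
      show c < Tm α G x
      rw [Tm_of_lt hxh]
      have := branch_strictMono hα0 hvm.1 hx0.le hx.1
      simp only [hvx] at this
      exact this
    intro hcon
    have : c ≤ x := csInf_le hbdd ⟨⟨hx0, by linarith⟩, hcon hTx⟩
    linarith
  have hnull := measure_mono_null hsub (ae_iff.1 hae)
  rw [mI_eq, Measure.restrict_apply measurableSet_Ioo, inter_eq_self_of_subset_left,
    Real.volume_Ioo, ENNReal.ofReal_eq_zero] at hnull
  · have := lt_min hvc hvm.2
    linarith
  · intro x hx
    exact ⟨hv0.trans hx.1, (hx.2.trans_le (min_le_right _ _)).trans (by norm_num)⟩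

end

noncomputable section

/-! ### Passage between measures and densities -/

theorem withDensity_ofReal_apply {h : ℝ → ℝ} (hh : Integrable h mI) (h0 : ∀ᵐ x ∂mI, 0 ≤ h x)
    {A : Set ℝ} (hA : MeasurableSet A) :
    (mI.withDensity fun x => ENNReal.ofReal (h x)) A = ENNReal.ofReal (∫ x in A, h x ∂mI) := by
  rw [withDensity_apply _ hA, ofReal_integral_eq_lintegral_ofReal hh.integrableOn
    (ae_restrict_of_ae h0)]

theorem integrable_of_prob {f : ℝ → ℝ} (hf : Measurable f) (h0 : ∀ x, 0 ≤ f x)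
    (hprob : IsProbabilityMeasure (mI.withDensity fun x => ENNReal.ofReal (f x))) :
    Integrable f mI ∧ ∫ x, f x ∂mI = 1 := by
  have h1 : ∫⁻ x, ENNReal.ofReal (f x) ∂mI = 1 := by
    have := hprob.measure_univ
    rwa [withDensity_apply _ MeasurableSet.univ, Measure.restrict_univ] at this
  have hint : Integrable f mI := by
    refine ⟨hf.aestronglyMeasurable, ?_⟩
    rw [hasFiniteIntegral_iff_ofReal (Filter.Eventually.of_forall h0), h1]
    exact ENNReal.one_lt_top
  refine ⟨hint, ?_⟩
  rw [integral_eq_lintegral_of_nonneg_ae (Filter.Eventually.of_forall h0)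
    hf.aestronglyMeasurable, h1]
  simp

theorem winv_of_ET {γ β : ℝ} {G1 G2 : LSVBranch} {p1 p2 f : ℝ → ℝ} (hp : ProbPair p1 p2)
    (hf : Measurable f) (h0 : ∀ x, 0 ≤ f x) (hint : Integrable f mI)
    (hinv : ET (LSVmap γ G1) (LSVmap β G2) p1 p2 (mI.withDensity fun x => ENNReal.ofReal (f x))
      = mI.withDensity fun x => ENNReal.ofReal (f x)) :
    WInv (Tm γ G1) (Tm β G2) p1 p2 f := by
  obtain ⟨hm1, hm2, hp01, -⟩ := hp
  intro A hA
  have key : ∀ (δ : ℝ) (G : LSVBranch) (p : ℝ → ℝ), Measurable p →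
      (∀ x ∈ Icc (0 : ℝ) 1, p x ∈ Icc (0 : ℝ) 1) →
      (((mI.withDensity fun x => ENNReal.ofReal (f x)).withDensity
        fun x => ENNReal.ofReal (p x)).map (LSVmap δ G)) A
        = ENNReal.ofReal (∫ x in Tm δ G ⁻¹' A, p x * f x ∂mI)
        ∧ 0 ≤ ∫ x in Tm δ G ⁻¹' A, p x * f x ∂mI := by
    intro δ G p hpm hp
    have hac : ((mI.withDensity fun x => ENNReal.ofReal (f x)).withDensity
        fun x => ENNReal.ofReal (p x)) ≪ mI :=
      (withDensity_absolutelyContinuous _ _).trans (withDensity_absolutelyContinuous _ _)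
    have hnn : ∀ᵐ x ∂mI, 0 ≤ p x * f x := by
      filter_upwards [ae_mem_Ioo] with x hx
      exact mul_nonneg (hp x (Ioo_subset_Icc_self hx)).1 (h0 x)
    refine ⟨?_, integral_nonneg_of_ae (ae_restrict_of_ae hnn)⟩
    rw [Measure.map_congr (hac.ae_eq (Tm_ae_eq δ G)),
      Measure.map_apply (Tm_measurable δ G) hA,
      ← withDensity_mul _ hf.ennreal_ofReal hpm.ennreal_ofReal,
      ← withDensity_ofReal_apply (integrable_prob_mul hpm hp hint) hnn (Tm_measurable δ G hA)]
    congr 2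
    funext x
    rw [Pi.mul_apply, ← ENNReal.ofReal_mul (h0 x), mul_comm]
  obtain ⟨e1, n1⟩ := key γ G1 p1 hm1 fun x hx => (hp01 x hx).1
  obtain ⟨e2, n2⟩ := key β G2 p2 hm2 fun x hx => (hp01 x hx).2
  have h := congrArg (fun ν : Measure ℝ => ν A) hinv
  simp only [ET, Measure.add_apply] at h
  rw [e1, e2, withDensity_ofReal_apply hint (Filter.Eventually.of_forall h0) hA,
    ← ENNReal.ofReal_add n1 n2, ENNReal.ofReal_eq_ofReal_iff (add_nonneg n1 n2)
    (integral_nonneg h0)] at h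
  exact h

/-- An invariant cone density of `T1` agrees with the density of the unique ACIM. -/
theorem ae_eq_star {α C : ℝ} {G1 : LSVBranch} {fstar h : ℝ → ℝ}
    (hstarmeas : Measurable fstar) (hstar0 : ∀ x, 0 ≤ fstar x)
    (hstarunique : ∀ ν : Measure ℝ, IsProbabilityMeasure ν → ν ≪ mI →
      Measure.map (LSVmap α G1) ν = ν →
      ν = mI.withDensity fun x => ENNReal.ofReal (fstar x))
    (hh : DensCone α C h)
    (hinv : ∀ A, MeasurableSet A → ∫ x in Tm α G1 ⁻¹' A, h x ∂mI = ∫ x in A, h x ∂mI) :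
    h =ᵐ[mI] fstar := by
  have h0 : ∀ᵐ x ∂mI, 0 ≤ h x := by
    filter_upwards [ae_mem_Ioo] with x hx using hh.nonneg x hx
  have hac := withDensity_absolutelyContinuous mI fun x => ENNReal.ofReal (h x)
  have heq := hstarunique (mI.withDensity fun x => ENNReal.ofReal (h x))
    ⟨by
      rw [withDensity_ofReal_apply hh.int h0 MeasurableSet.univ, Measure.restrict_univ, hh.one,
        ENNReal.ofReal_one]⟩
    hac
    (by
      rw [Measure.map_congr (hac.ae_eq (Tm_ae_eq α G1))]
      ext A hA
      rw [Measure.map_apply (Tm_measurable α G1) hA, withDensity_ofReal_apply hh.int h0 hA,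
        withDensity_ofReal_apply hh.int h0 (Tm_measurable α G1 hA), hinv A hA])
  have hfin : ∫⁻ x, ENNReal.ofReal (h x) ∂mI ≠ ⊤ :=
    ((hasFiniteIntegral_iff_ofReal h0).1 hh.int.2).ne
  rw [withDensity_eq_iff hh.int.1.aemeasurable.ennreal_ofReal
    hstarmeas.ennreal_ofReal.aemeasurable hfin] at heq
  filter_upwards [heq, h0] with x hx hx0
  exact (ENNReal.ofReal_eq_ofReal_iff hx0 (hstar0 x)).1 hx

/-! ### Uniqueness of the invariant density of the random map -/

/-- If the unique ACIM of `T1` has an almost everywhere positive density, then the random map has at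
most one invariant density.  For two of them, `f` and `h`, the set `{f > h}` is forward invariant
under `T1` up to null sets, hence null or of full measure. -/
theorem winv_unique {α : ℝ} {G1 : LSVBranch} {T2 p1 p2 fstar f h : ℝ → ℝ}
    (hp : ProbPair p1 p2) (hpos1 : ∀ x ∈ Icc (0 : ℝ) 1, 0 < p1 x)
    (hstarmeas : Measurable fstar) (hstarpos : ∀ᵐ x ∂mI, 0 < fstar x)
    (hstarprob : IsProbabilityMeasure (mI.withDensity fun x => ENNReal.ofReal (fstar x)))
    (hstarinv : Measure.map (LSVmap α G1) (mI.withDensity fun x => ENNReal.ofReal (fstar x))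
      = mI.withDensity fun x => ENNReal.ofReal (fstar x))
    (hstarunique : ∀ ν : Measure ℝ, IsProbabilityMeasure ν → ν ≪ mI →
      Measure.map (LSVmap α G1) ν = ν →
      ν = mI.withDensity fun x => ENNReal.ofReal (fstar x))
    (hT2 : Measurable T2) (hf : Measurable f) (hfi : Integrable f mI) (hf1 : ∫ x, f x ∂mI = 1)
    (hfinv : WInv (Tm α G1) T2 p1 p2 f)
    (hh : Measurable h) (hhi : Integrable h mI) (hh1 : ∫ x, h x ∂mI = 1)
    (hhinv : WInv (Tm α G1) T2 p1 p2 h) : f =ᵐ[mI] h := by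
  obtain ⟨hm1, hm2, hp01, hsum⟩ := hp
  set T1 := Tm α G1 with hT1def
  have hT1 : Measurable T1 := Tm_measurable α G1
  set d : ℝ → ℝ := fun x => f x - h x with hd
  have hdi : Integrable d mI := hfi.sub hhi
  have hd0 : ∫ x, d x ∂mI = 0 := by
    rw [integral_sub hfi hhi, hf1, hh1, sub_self]
  have hq1 : ∀ x ∈ Icc (0 : ℝ) 1, p1 x ∈ Icc (0 : ℝ) 1 := fun x hx => (hp01 x hx).1
  have hq2 : ∀ x ∈ Icc (0 : ℝ) 1, p2 x ∈ Icc (0 : ℝ) 1 := fun x hx => (hp01 x hx).2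
  have hdinv : WInv T1 T2 p1 p2 d := by
    intro A hA
    have e : ∀ p : ℝ → ℝ, Measurable p → (∀ x ∈ Icc (0 : ℝ) 1, p x ∈ Icc (0 : ℝ) 1) →
        ∀ B : Set ℝ, ∫ x in B, p x * d x ∂mI
          = ∫ x in B, p x * f x ∂mI - ∫ x in B, p x * h x ∂mI := by
      intro p hpm hpq B
      rw [← integral_sub (integrable_prob_mul hpm hpq hfi).integrableOn
        (integrable_prob_mul hpm hpq hhi).integrableOn]
      simp only [hd, mul_sub]
    rw [e p1 hm1 hq1, e p2 hm2 hq2, integral_sub hfi.integrableOn hhi.integrableOn,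
      ← hfinv A hA, ← hhinv A hA]
    ring
  set A : Set ℝ := {x | 0 < d x} with hAdef
  have hA : MeasurableSet A := measurableSet_lt measurable_const (hf.sub hh)
  have hI1 := integrable_prob_mul hm1 hq1 hdi
  have hI2 := integrable_prob_mul hm2 hq2 hdi
  -- comparing `∫_A d` with its image under the transfer operator
  have hsplit : ∀ p : ℝ → ℝ, (∀ x ∈ Icc (0 : ℝ) 1, p x ∈ Icc (0 : ℝ) 1) →
      Integrable (fun x => p x * d x) mI → ∀ S : Set ℝ, MeasurableSet S →
      0 ≤ ∫ x in A \ S, p x * d x ∂mI ∧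
      ∫ x in S, p x * d x ∂mI + ∫ x in A \ S, p x * d x ∂mI ≤ ∫ x in A, p x * d x ∂mI := by
    intro p hp hpi S hS
    have e1 := integral_inter_add_sdiff hA (hpi.integrableOn (s := S))
    have e2 := integral_inter_add_sdiff hS (hpi.integrableOn (s := A))
    rw [inter_comm] at e2
    have e3 : ∫ x in S \ A, p x * d x ∂mI ≤ 0 := by
      refine integral_nonpos_of_ae ?_
      filter_upwards [ae_restrict_of_ae ae_mem_Ioo, ae_restrict_mem (hS.diff hA)] with x hx hxA
      exact mul_nonpos_of_nonneg_of_nonpos (hp x (Ioo_subset_Icc_self hx)).1 (not_lt.1 hxA.2)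
    refine ⟨?_, by linarith⟩
    refine integral_nonneg_of_ae ?_
    filter_upwards [ae_restrict_of_ae ae_mem_Ioo, ae_restrict_mem (hA.diff hS)] with x hx hxA
    exact mul_nonneg (hp x (Ioo_subset_Icc_self hx)).1 (le_of_lt hxA.1)
  obtain ⟨a1, b1⟩ := hsplit p1 hq1 hI1 _ (hT1 hA)
  obtain ⟨a2, b2⟩ := hsplit p2 hq2 hI2 _ (hT2 hA)
  have hAd : ∫ x in A, p1 x * d x ∂mI + ∫ x in A, p2 x * d x ∂mI = ∫ x in A, d x ∂mI := by
    rw [← integral_add hI1.integrableOn hI2.integrableOn]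
    refine integral_congr_ae (ae_restrict_of_ae ?_)
    filter_upwards [ae_mem_Ioo] with x hx
    rw [← add_mul, hsum x (Ioo_subset_Icc_self hx), one_mul]
  have hz : ∫ x in A \ T1 ⁻¹' A, p1 x * d x ∂mI = 0 := by
    have := hdinv A hA
    linarith
  have hforward : mI (A \ T1 ⁻¹' A) = 0 := by
    have hnn : 0 ≤ᵐ[mI.restrict (A \ T1 ⁻¹' A)] fun x => p1 x * d x := by
      filter_upwards [ae_restrict_of_ae ae_mem_Ioo, ae_restrict_mem (hA.diff (hT1 hA))]
        with x hx hxA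
      exact mul_nonneg (hq1 x (Ioo_subset_Icc_self hx)).1 (le_of_lt hxA.1)
    rw [setIntegral_eq_zero_iff_of_nonneg_ae hnn hI1.integrableOn] at hz
    have hz' := (ae_restrict_iff' (hA.diff (hT1 hA))).1 hz
    rw [measure_eq_zero_iff_ae_notMem]
    filter_upwards [hz', ae_mem_Ioo] with x hx hxI hxA
    have h1 : p1 x * d x = 0 := hx hxA
    have h2 : 0 < p1 x * d x := mul_pos (hpos1 x (Ioo_subset_Icc_self hxI)) hxA.1
    exact absurd h1 (ne_of_gt h2)
  -- the ACIM `μ` of `T1` gives `A` measure `0` or `1`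
  set μ : Measure ℝ := mI.withDensity fun x => ENNReal.ofReal (fstar x) with hμ
  have hμac : μ ≪ mI := withDensity_absolutelyContinuous _ _
  have hacμ : mI ≪ μ := by
    refine withDensity_absolutelyContinuous' hstarmeas.ennreal_ofReal.aemeasurable ?_
    filter_upwards [hstarpos] with x hx
    exact (ENNReal.ofReal_pos.2 hx).ne'
  have hμinv : ∀ B, MeasurableSet B → μ (T1 ⁻¹' B) = μ B := by
    intro B hB
    rw [← Measure.map_apply hT1 hB, ← Measure.map_congr (hμac.ae_eq (Tm_ae_eq α G1)), hstarinv]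
  have hAinv : A =ᵐ[μ] T1 ⁻¹' A := by
    refine ae_eq_of_ae_subset_of_measure_ge ?_ (hμinv A hA).le hA.nullMeasurableSet
      (measure_ne_top _ _)
    rw [ae_le_set]
    exact hμac hforward
  suffices hdz : d =ᵐ[mI] 0 by
    filter_upwards [hdz] with x hx
    exact sub_eq_zero.1 hx
  by_cases hμA : μ A = 0
  · have hneg : ∀ᵐ x ∂mI, d x ≤ 0 := by
      filter_upwards [measure_eq_zero_iff_ae_notMem.1 (hacμ hμA)] with x hx using not_lt.1 hx
    have h1 : ∫ x, -d x ∂mI = 0 := by rw [integral_neg, hd0, neg_zero]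
    have h2 := (integral_eq_zero_iff_of_nonneg_ae (f := fun x => -d x)
      (by filter_upwards [hneg] with x hx using neg_nonneg.2 hx) hdi.neg).1 h1
    filter_upwards [h2] with x hx using neg_eq_zero.1 hx
  · have hcac : ProbabilityTheory.cond μ A ≪ mI :=
      ProbabilityTheory.cond_absolutelyContinuous.trans hμac
    have hcond : ProbabilityTheory.cond μ A = μ := by
      refine hstarunique _ (ProbabilityTheory.cond_isProbabilityMeasure hμA) hcac ?_
      rw [Measure.map_congr (hcac.ae_eq (Tm_ae_eq α G1))]
      ext B hB
      rw [Measure.map_apply hT1 hB, ProbabilityTheory.cond_apply hA, ProbabilityTheory.cond_apply hA]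
      congr 1
      rw [measure_congr (hAinv.inter (Filter.EventuallyEq.refl _ (T1 ⁻¹' B))), ← preimage_inter,
        hμinv _ (hA.inter hB)]
    have hAc : μ Aᶜ = 0 := by
      rw [← hcond, ProbabilityTheory.cond_apply hA]
      simp
    have hnn : 0 ≤ᵐ[mI] d := by
      filter_upwards [measure_eq_zero_iff_ae_notMem.1 (hacμ hAc)] with x hx
      exact (le_of_lt (not_not.1 hx))
    rwa [integral_eq_zero_iff_of_nonneg_ae hnn hdi] at hd0

theorem le_iSup_prob {p : ℝ → ℝ} (hp : ∀ x ∈ Icc (0 : ℝ) 1, p x ∈ Icc (0 : ℝ) 1) {x : ℝ}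
    (hx : x ∈ Icc (0 : ℝ) 1) : p x ≤ ⨆ y ∈ Icc (0 : ℝ) 1, p y := by
  have hb : BddAbove (range fun y => ⨆ _ : y ∈ Icc (0 : ℝ) 1, p y) := by
    refine ⟨1, ?_⟩
    rintro _ ⟨y, rfl⟩
    exact Real.iSup_le (fun hy => (hp y hy).2) zero_le_one
  refine le_trans ?_ (le_ciSup hb x)
  simp [hx.1, hx.2]

end

noncomputable section

/-- **Theorem 6.1 (strong stochastic stability).** For `ε ∈ (0,α)`, let
`T_ε = {T1, T_{1,ε}; p_{1,ε}, p_{2,ε}}` be the random map consisting of the LSV-type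
map `T1` with exponent `α` and the LSV-type map `T_{1,ε}` with exponent `α - ε`,
satisfying Assumptions (A) and (B), and let `f_ε` be the density of the unique ACIM of
`T_ε`. Let `f*` be the density of the unique ACIM of the deterministic map `T1`.
If `sup_x p_{2,ε}(x) → 0` as `ε → 0`, then `‖f_ε − f*‖_{L¹(m)} → 0` as `ε → 0`. -/
theorem strong_stochastic_stability
    (α : ℝ) (hα0 : 0 < α) (hα1 : α < 1)
    (G1 : LSVBranch) (Gε : ℝ → LSVBranch)
    (p1 p2 : ℝ → ℝ → ℝ) (f : ℝ → ℝ → ℝ) (fstar : ℝ → ℝ)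
    (hp : ∀ ε ∈ Ioo (0 : ℝ) α, ProbPair (p1 ε) (p2 ε))
    (hA1 : ∀ ε ∈ Ioo (0 : ℝ) α, AssumptionA α G1 (p1 ε))
    (hA2 : ∀ ε ∈ Ioo (0 : ℝ) α, AssumptionA (α - ε) (Gε ε) (p2 ε))
    (hB : ∀ ε ∈ Ioo (0 : ℝ) α, AssumptionB (p1 ε) (p2 ε))
    -- `f ε` is the density of the (unique) ACIM of the random map `T_ε`
    (hfmeas : ∀ ε ∈ Ioo (0 : ℝ) α, Measurable (f ε) ∧ ∀ x, 0 ≤ f ε x)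
    (hfprob : ∀ ε ∈ Ioo (0 : ℝ) α,
      IsProbabilityMeasure (mI.withDensity fun x => ENNReal.ofReal (f ε x)))
    (hfinv : ∀ ε ∈ Ioo (0 : ℝ) α,
      ET (LSVmap α G1) (LSVmap (α - ε) (Gε ε)) (p1 ε) (p2 ε)
          (mI.withDensity fun x => ENNReal.ofReal (f ε x))
        = mI.withDensity fun x => ENNReal.ofReal (f ε x))
    -- `fstar` is the density of the unique ACIM of the deterministic map `T1`
    (hstarmeas : Measurable fstar) (hstar0 : ∀ x, 0 ≤ fstar x)
    (hstarprob : IsProbabilityMeasure (mI.withDensity fun x => ENNReal.ofReal (fstar x)))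
    (hstarinv : Measure.map (LSVmap α G1) (mI.withDensity fun x => ENNReal.ofReal (fstar x))
      = mI.withDensity fun x => ENNReal.ofReal (fstar x))
    (hstarunique : ∀ ν : Measure ℝ, IsProbabilityMeasure ν → ν ≪ mI →
      Measure.map (LSVmap α G1) ν = ν →
      ν = mI.withDensity fun x => ENNReal.ofReal (fstar x))
    -- the perturbation is small: `sup_x p_{2,ε}(x) → 0` as `ε → 0`
    (hsup : Filter.Tendsto (fun ε => ⨆ x ∈ Icc (0 : ℝ) 1, p2 ε x)
      (nhdsWithin 0 (Ioo (0 : ℝ) α)) (nhds 0)) :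
    Filter.Tendsto (fun ε => ∫ x, |f ε x - fstar x| ∂mI)
      (nhdsWithin 0 (Ioo (0 : ℝ) α)) (nhds 0) := by
  -- every `T_ε` has an invariant density in a cone which does not depend on `ε`
  have hex : ∀ ε : Ioo (0 : ℝ) α, ∃ h, DensCone α (8 / (1 - α)) h ∧
      WInv (Tm α G1) (Tm (α - ε) (Gε ε)) (p1 ε) (p2 ε) h := fun ε =>
    exists_inv hα0 hα1 (by linarith [ε.2.2]) (by linarith [ε.2.1]) (hp ε ε.2) (hA1 ε ε.2)
      (hA2 ε ε.2)
  choose H hHc hHinv using hex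
  -- along any sequence `ε_n → 0` a subsequence of these densities converges to an invariant one
  have hsub : ∀ e : ℕ → Ioo (0 : ℝ) α,
      Filter.Tendsto (fun n => (e n : ℝ)) Filter.atTop (nhdsWithin 0 (Ioo (0 : ℝ) α)) →
      ∃ φ : ℕ → ℕ, ∃ h, DensCone α (8 / (1 - α)) h ∧
        (∀ A, MeasurableSet A → ∫ x in Tm α G1 ⁻¹' A, h x ∂mI = ∫ x in A, h x ∂mI) ∧
        h =ᵐ[mI] fstar ∧
        Filter.Tendsto (fun n => ∫ x, |H (e (φ n)) x - h x| ∂mI) Filter.atTop (nhds 0) := by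
    intro e he
    obtain ⟨φ, hφ, h, hh, hlim⟩ := cone_compact hα1 (fun n => hHc (e n))
    have hinv := limit_inv (T1 := Tm α G1) (fun n => hp _ (e (φ n)).2)
      (fun n x hx => le_iSup_prob (fun y hy => ((hp _ (e (φ n)).2).2.2.1 y hy).2) hx)
      ((hsup.comp he).comp hφ.tendsto_atTop) (fun n => hHc (e (φ n)))
      (fun n => hHinv (e (φ n))) hh hlim
    exact ⟨φ, h, hh, hinv, ae_eq_star hstarmeas hstar0 hstarunique hh hinv, hlim⟩
  -- hence `fstar` is almost everywhere positive
  have hpos : ∀ᵐ x ∂mI, 0 < fstar x := by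
    have hmem : ∀ n : ℕ, α * (1 / ((n : ℝ) + 1)) / 2 ∈ Ioo (0 : ℝ) α := by
      intro n
      have h1 : 1 / ((n : ℝ) + 1) ≤ 1 := by
        rw [div_le_one (by positivity)]
        linarith [Nat.cast_nonneg (α := ℝ) n]
      have h2 : 0 < 1 / ((n : ℝ) + 1) := by positivity
      constructor
      · positivity
      · nlinarith
    obtain ⟨-, h, hh, hinv, heq, -⟩ := hsub (fun n => ⟨_, hmem n⟩) (by
      refine tendsto_nhdsWithin_iff.2 ⟨?_, Filter.Eventually.of_forall hmem⟩
      simpa using ((tendsto_one_div_add_atTop_nhds_zero_nat (𝕜 := ℝ)).const_mul α).div_const 2)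
    have hε0 : α / 2 ∈ Ioo (0 : ℝ) α := ⟨by linarith, by linarith⟩
    have := invariant_pos hα0 (hA1 _ hε0) hh hinv
    filter_upwards [heq, ae_mem_Ioo] with x hx hxI
    rw [← hx]
    exact this x hxI
  -- which makes the invariant density of `T_ε` unique
  have hfH : ∀ ε : Ioo (0 : ℝ) α, f ε =ᵐ[mI] H ε := by
    intro ε
    obtain ⟨hfm, hf0⟩ := hfmeas ε ε.2
    obtain ⟨hfi, hf1⟩ := integrable_of_prob hfm hf0 (hfprob ε ε.2)
    obtain ⟨δ, hδ, hδp⟩ := hB ε ε.2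
    have hHi := (hHc ε).int
    have hmk := hHi.1.ae_eq_mk
    have hinvmk : WInv (Tm α G1) (Tm (α - ε) (Gε ε)) (p1 ε) (p2 ε) (hHi.1.mk (H ε)) := by
      intro A hA
      have e : ∀ (p : ℝ → ℝ) (B : Set ℝ), ∫ x in B, p x * hHi.1.mk (H ε) x ∂mI
          = ∫ x in B, p x * H ε x ∂mI := by
        intro p B
        refine integral_congr_ae (ae_restrict_of_ae ?_)
        filter_upwards [hmk] with x hx
        rw [hx]
      rw [e, e, hHinv ε A hA]
      exact integral_congr_ae (ae_restrict_of_ae hmk)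
    refine (winv_unique (hp ε ε.2) (fun x hx => hδ.trans_le (hδp x hx).1) hstarmeas hpos hstarprob
      hstarinv hstarunique (Tm_measurable _ _) hfm hfi hf1
      (winv_of_ET (hp ε ε.2) hfm hf0 hfi (hfinv ε ε.2))
      hHi.1.stronglyMeasurable_mk.measurable (hHi.congr hmk) ?_ hinvmk).trans hmk.symm
    rw [← integral_congr_ae hmk, (hHc ε).one]
  refine Filter.tendsto_of_subseq_tendsto fun e he => ?_
  -- discard the finitely many terms outside `(0, α)`
  obtain ⟨N, hN⟩ := Filter.eventually_atTop.1 (tendsto_nhdsWithin_iff.1 he).2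
  obtain ⟨φ, h, hh, -, heq, hlim⟩ := hsub (fun n => ⟨e (n + N), hN _ (Nat.le_add_left _ _)⟩)
    (he.comp (Filter.tendsto_add_atTop_nat N))
  refine ⟨fun n => φ n + N, hlim.congr fun n => ?_⟩
  refine integral_congr_ae ?_
  filter_upwards [heq, hfH ⟨e (φ n + N), hN _ (Nat.le_add_left _ _)⟩] with x h1 h2
  rw [h1, ← h2]

end
end

section
/- For every α ∈ (0,1), the function x ↦ ((1 + x^α)/3) / (1 + (1+α) 2^α x^α) is decreasing on [0,1/2); equivalently, with T1(x) = x(1 + 2^α x^α) and p1(x) = (1 + x^α)/3, the derivative estimate p1'(x) T1'(x) − p1(x) T1''(x) ≤ 0 holds for all x ∈ (0,1/2), using that 1 < 2^α(1+α) for all α ∈ (0,1). -/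
/-! With `c = (1 + α) 2^α` and `t = x^α`, the quotient is `(1 + t) / (3 (1 + c t))`, a Möbius
function of `t` whose monotonicity is governed by the sign of `1 - c`. Since `2^α > 1` we have
`c > 1`, so it decreases in `t`, and `t` increases with `x`. The derivative expression
likewise collapses to `α x^(α-1) (1 - c) / 3`. -/

open Set

/-- **Example 4.1, verification of Assumption (A) for the first branch.** For every
`α ∈ (0,1)`, the function `x ↦ p1(x)/T1'(x) = ((1 + x^α)/3) / (1 + (1+α) 2^α x^α)` is
decreasing on `[0,1/2)`; equivalently, with `T1(x) = x(1 + 2^α x^α)` and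
`p1(x) = (1 + x^α)/3`, the derivative estimate `p1'(x) T1'(x) − p1(x) T1''(x) ≤ 0`
holds for all `x ∈ (0,1/2)` (using that `1 < 2^α (1+α)` for all `α ∈ (0,1)`). -/
theorem example_assumptionA_first_branch (α : ℝ) (hα0 : 0 < α) (hα1 : α < 1) :
    AntitoneOn (fun x : ℝ => ((1 + x ^ α) / 3) / (1 + (1 + α) * 2 ^ α * x ^ α))
      (Ico (0 : ℝ) (1 / 2)) ∧
    ∀ x ∈ Ioo (0 : ℝ) (1 / 2),
      (α * x ^ (α - 1) / 3) * (1 + (1 + α) * 2 ^ α * x ^ α)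
        - ((1 + x ^ α) / 3) * (α * (1 + α) * 2 ^ α * x ^ (α - 1)) ≤ 0 := by
  have hc : 1 < (1 + α) * (2 : ℝ) ^ α := by
    have h2 : (1 : ℝ) < 2 ^ α := Real.one_lt_rpow (by norm_num) hα0
    nlinarith
  have hassoc : α * (1 + α) * (2 : ℝ) ^ α = α * ((1 + α) * 2 ^ α) := by ring
  simp only [hassoc]
  generalize (1 + α) * (2 : ℝ) ^ α = c at hc ⊢
  constructor
  · intro x hx y hy hxy
    have hx0 : 0 ≤ x ^ α := Real.rpow_nonneg hx.1 α
    have hy0 : 0 ≤ y ^ α := Real.rpow_nonneg hy.1 α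
    have hpow : x ^ α ≤ y ^ α := Real.rpow_le_rpow hx.1 hxy hα0.le
    have hdx : 0 < 1 + c * x ^ α := by nlinarith
    have hdy : 0 < 1 + c * y ^ α := by nlinarith
    -- After clearing denominators the claim is `0 ≤ (c - 1) * (y ^ α - x ^ α)`.
    show (1 + y ^ α) / 3 / (1 + c * y ^ α) ≤ (1 + x ^ α) / 3 / (1 + c * x ^ α)
    rw [div_le_div_iff₀ hdy hdx]
    nlinarith [mul_nonneg (sub_nonneg.2 hc.le) (sub_nonneg.2 hpow)]
  · intro x hx
    have hd : 0 < x ^ (α - 1) := Real.rpow_pos_of_pos hx.1 _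
    -- The `x ^ α` terms cancel, leaving the derivative of `p1` times `1 - c`.
    have key : (α * x ^ (α - 1) / 3) * (1 + c * x ^ α)
        - ((1 + x ^ α) / 3) * (α * c * x ^ (α - 1)) = α * x ^ (α - 1) / 3 * (1 - c) := by
      ring
    rw [key]
    exact mul_nonpos_of_nonneg_of_nonpos (by positivity) (by linarith)
end
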